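/- arXiv:1712.00887 — 2 statements merged into one kernel-verified Lean document; each statement's English description precedes it below -/
import Mathlib

section
/- Let n > 1. If G is a gap-free and n-claw-free finite simple graph, then reg I(G) ≤ n. -/
/-!
The proof is an induction on induced subgraphs `G[W]`, with the claw bound `m` allowed to vary.
For a vertex `x` of maximal degree in `G[W]` one has
`I(G[W]) = I(G[W \ x]) + x J`, where `J = I(G[W \ N[x]]) + (N(x))` contains `I(G[W \ x])`
(`indIdeal_eq_sup`, `indIdeal_erase_le`).

Combinatorics (`NoClawOn.awayFrom`): if `G` is gap-free and `G[W]` has no `m`-claw, then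
`G[W \ N[x]]` has no `(m-1)`-claw. Suppose `c` is the centre of one. A neighbour `y` of `x` that is
not adjacent to `c` would be adjacent to every leaf `l`, as the edges `xy` and `cl` form no gap, so
`y` would be the centre of an `m`-claw whose leaves are `x` and those of `c`. Hence `N(x) ⊆ N(c)`,
and the inclusion is strict because of the leaves, against the maximality of the degree of `x`.

Algebra (`RegLE.sup_X_mul`): the variable `x` is a nonzerodivisor modulo `I = I(G[W \ x])`, so
`I ∩ x J = x I`, and the exact sequence `0 → x I → I ⊕ x J → I + x J → 0` gives
`reg (I + x J) ≤ max (reg I, reg J + 1)`. By induction `reg I ≤ m` and `reg J ≤ m - 1`, since adding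
variables to an ideal not involving them preserves the bound (`regLE_indIdeal_add_vars`). For `m = 1`
there are no edges.

The homological input is developed directly for resolutions with a degree bound: `HasRes` is a
recursive form of the condition that `F_i` be generated in degrees at most `r + i`, which is stable
under extensions (`HasRes.horseshoe`), quotients (`HasRes.cone`) and shifts (`HasRes.shift`).
`RegLE.exists_gradedFreeRes` turns such a resolution into a `GradedFreeRes`.
-/

open MvPolynomial

/-- The edge ideal `I(G)` of a finite simple graph `G` on vertex set `{x_1, ..., x_n}`:
the ideal of `S = K[x_1, ..., x_n]` generated by the monomials `x_i * x_j` for the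
edges `{x_i, x_j}` of `G`. -/
noncomputable def edgeIdeal (K : Type) [Field K] {n : ℕ} (G : SimpleGraph (Fin n)) :
    Ideal (MvPolynomial (Fin n) K) :=
  Ideal.span { m | ∃ i j, G.Adj i j ∧ m = X i * X j }

/-- A finite graded free resolution of an ideal `I` of the polynomial ring
`S = K[x_1, ..., x_n]`.  The `i`-th free module is `F i = ⨁_a S(-shift i a)`,
realized as `Fin (rank i) → S`; the differentials and the augmentation `F 0 → I ⊆ S`
are degree-preserving (each matrix entry is homogeneous of the appropriate degree),
and the complex `0 → F len → ⋯ → F 1 → F 0 → I → 0` is exact. -/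
structure GradedFreeRes {n : ℕ} (K : Type) [Field K]
    (I : Ideal (MvPolynomial (Fin n) K)) where
  len : ℕ
  rank : ℕ → ℕ
  rank_zero : ∀ i, len < i → rank i = 0
  shift : (i : ℕ) → Fin (rank i) → ℕ
  d : (i : ℕ) →
    ((Fin (rank (i + 1)) → MvPolynomial (Fin n) K) →ₗ[MvPolynomial (Fin n) K]
      (Fin (rank i) → MvPolynomial (Fin n) K))
  aug : (Fin (rank 0) → MvPolynomial (Fin n) K) →ₗ[MvPolynomial (Fin n) K]
      MvPolynomial (Fin n) K
  aug_range : LinearMap.range aug = I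
  exact_zero : LinearMap.ker aug = LinearMap.range (d 0)
  exact_succ : ∀ i, LinearMap.ker (d i) = LinearMap.range (d (i + 1))
  homog_aug : ∀ a, (aug (Pi.single a 1)).IsHomogeneous (shift 0 a)
  homog_d : ∀ i (b : Fin (rank (i + 1))) (a : Fin (rank i)),
    d i (Pi.single b 1) a = 0 ∨
      ∃ e, shift (i + 1) b = shift i a + e ∧ (d i (Pi.single b 1) a).IsHomogeneous e

/-- The Castelnuovo–Mumford regularity of an ideal `I ⊆ K[x_1, ..., x_n]`:
the least integer `r` such that `I` admits a (finite) graded free resolution whose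
`i`-th free module is generated in degrees `≤ r + i`.  The minimum is attained by the
minimal graded free resolution, so this agrees with the usual definition
`reg I = max { j - i : β_{i,j}(I) ≠ 0 }`. -/
noncomputable def reg {n : ℕ} (K : Type) [Field K]
    (I : Ideal (MvPolynomial (Fin n) K)) : ℤ :=
  sInf { r : ℤ | ∃ F : GradedFreeRes K I,
    ∀ i, ∀ a : Fin (F.rank i), (F.shift i a : ℤ) - (i : ℤ) ≤ r }

/-- Two disjoint edges `uv` and `xy` of `G` form a gap if `G` has no edge with one
endpoint in `{u, v}` and the other in `{x, y}`; `G` is gap-free if no two of its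
edges form a gap. -/
def GapFree {V : Type} (G : SimpleGraph V) : Prop :=
  ¬ ∃ u v x y, G.Adj u v ∧ G.Adj x y ∧ u ≠ x ∧ u ≠ y ∧ v ≠ x ∧ v ≠ y ∧
    ¬ G.Adj u x ∧ ¬ G.Adj u y ∧ ¬ G.Adj v x ∧ ¬ G.Adj v y

/-- `G` is `m`-claw-free: `G` has no induced subgraph isomorphic to the complete
bipartite graph `K_{1,m}` (an `m`-claw). -/
def ClawFree (m : ℕ) {V : Type} (G : SimpleGraph V) : Prop :=
  IsEmpty (completeBipartiteGraph (Fin 1) (Fin m) ↪g G)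


/-! ### Graded modules and resolutions with a degree bound -/

section Resolutions

variable {n : ℕ} {K : Type} [Field K]

/-- The polynomial ring `S = K[x_1, ..., x_n]`. -/
abbrev PolyRing (n : ℕ) (K : Type) [Field K] := MvPolynomial (Fin n) K

/-- The grading of the free module `⨁_i S(-s i)`, realized as `ι → S`. A grading is encoded as a
family of additive subgroups indexed by `Option ℕ`: `some d` gives the component of degree `d`, and
`none` gives the whole module, so that a homogeneous surjectivity condition quantified over
`Option ℕ` contains the plain one. The condition `d = s i + e` avoids truncated subtraction. -/
noncomputable def freeGr {ι : Type} (s : ι → ℕ) : Option ℕ → AddSubgroup (ι → PolyRing n K)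
  | none => ⊤
  | some d =>
    { carrier := {v | ∀ i, v i = 0 ∨ ∃ e, d = s i + e ∧ (v i).IsHomogeneous e}
      zero_mem' := fun _ => Or.inl rfl
      add_mem' := by
        intro v w hv hw i
        rcases hv i with h | ⟨e, he, h⟩
        · simpa [h] using hw i
        · rcases hw i with h' | ⟨e', he', h'⟩
          · simpa [h'] using Or.inr ⟨e, he, h⟩
          · obtain rfl : e = e' := by omega
            exact Or.inr ⟨e, he, h.add h'⟩
      neg_mem' := by
        intro v hv i
        rcases hv i with h | ⟨e, he, h⟩
        · exact Or.inl (by simp [h])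
        · exact Or.inr ⟨e, he, (homogeneousSubmodule (Fin n) K e).neg_mem h⟩ }

/-- `ℳ` is compatible with the grading of `S`. The components are not required to decompose `M`:
every use of the grading is through homogeneous elements. -/
structure IsGr {M : Type} [AddCommGroup M] [Module (PolyRing n K) M]
    (ℳ : Option ℕ → AddSubgroup M) : Prop where
  none_eq : ℳ none = ⊤
  smul_mem : ∀ (p : PolyRing n K) (e d : ℕ) (m : M), p.IsHomogeneous e → m ∈ ℳ (some d) →
    p • m ∈ ℳ (some (d + e))

/-- The grading induced on a submodule. -/
noncomputable def subGr {M : Type} [AddCommGroup M] [Module (PolyRing n K) M]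
    (ℳ : Option ℕ → AddSubgroup M) (N : Submodule (PolyRing n K) M) (t : Option ℕ) :
    AddSubgroup N :=
  (ℳ t).comap N.subtype.toAddMonoidHom

lemma mem_subGr {M : Type} [AddCommGroup M] [Module (PolyRing n K) M]
    {ℳ : Option ℕ → AddSubgroup M} {N : Submodule (PolyRing n K) M} {t : Option ℕ} {x : N} :
    x ∈ subGr ℳ N t ↔ (x : M) ∈ ℳ t := Iff.rfl

lemma IsGr.sub {M : Type} [AddCommGroup M] [Module (PolyRing n K) M]
    {ℳ : Option ℕ → AddSubgroup M} (h : IsGr (n := n) (K := K) ℳ)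
    (N : Submodule (PolyRing n K) M) : IsGr (n := n) (K := K) (subGr ℳ N) where
  none_eq := by
    ext x
    simp [mem_subGr, h.none_eq]
  smul_mem p e d m hp hm := h.smul_mem p e d m hp hm

lemma isGr_freeGr {ι : Type} (s : ι → ℕ) :
    IsGr (n := n) (K := K) (freeGr (n := n) (K := K) s) where
  none_eq := rfl
  smul_mem p e d m hp hm := by
    intro i
    rcases hm i with h | ⟨e', he, h⟩
    · exact Or.inl (by simp [h])
    · exact Or.inr ⟨e + e', by omega, hp.mul h⟩

/-- The graded module `M` has a graded free resolution `0 → F_{k-1} → ⋯ → F_0 → M → 0` such that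
`F_i` is generated in degrees at most `r + i`. The definition is recursive: `F_0` maps onto `M`, in
each degree, and the kernel has such a resolution of length `k - 1` with bound `r + 1`. -/
def HasRes : ℕ → ℕ → (M : Type) → [AddCommGroup M] → [Module (PolyRing n K) M] →
    (Option ℕ → AddSubgroup M) → Prop
  | 0, _, M, _, _, _ => Subsingleton M
  | k + 1, r, M, _, _, ℳ =>
    ∃ (ι : Type) (_ : Fintype ι) (_ : DecidableEq ι) (s : ι → ℕ)
      (f : (ι → PolyRing n K) →ₗ[PolyRing n K] M),
      (∀ i, s i ≤ r) ∧ (∀ i, f (Pi.single i 1) ∈ ℳ (some (s i))) ∧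
      (∀ t, ∀ m ∈ ℳ t, ∃ v ∈ freeGr s t, f v = m) ∧
      HasRes k (r + 1) (LinearMap.ker f) (subGr (freeGr s) (LinearMap.ker f))

lemma HasRes.mono {k r r' : ℕ} {M : Type} [AddCommGroup M] [Module (PolyRing n K) M]
    {ℳ : Option ℕ → AddSubgroup M} (h : HasRes (n := n) (K := K) k r M ℳ) (hr : r ≤ r') :
    HasRes (n := n) (K := K) k r' M ℳ := by
  induction k generalizing r r' M with
  | zero => exact h
  | succ k ih =>
    obtain ⟨ι, _, _, s, f, hs, hg, hf, hk⟩ := h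
    exact ⟨ι, inferInstance, inferInstance, s, f, fun i => (hs i).trans hr, hg, hf, ih hk (by omega)⟩

lemma HasRes.succ {k r : ℕ} {M : Type} [AddCommGroup M] [Module (PolyRing n K) M]
    {ℳ : Option ℕ → AddSubgroup M} (h : HasRes (n := n) (K := K) k r M ℳ) :
    HasRes (n := n) (K := K) (k + 1) r M ℳ := by
  induction k generalizing r M with
  | zero =>
    have : Subsingleton M := h
    refine ⟨Empty, inferInstance, inferInstance, Empty.elim, 0, fun i => i.elim,
      fun i => i.elim, fun t m _ => ⟨0, zero_mem _, Subsingleton.elim _ _⟩, ?_⟩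
    change Subsingleton _
    infer_instance
  | succ k ih =>
    obtain ⟨ι, _, _, s, f, hs, hg, hf, hk⟩ := h
    exact ⟨ι, inferInstance, inferInstance, s, f, hs, hg, hf, ih hk⟩

lemma HasRes.le {k k' r : ℕ} {M : Type} [AddCommGroup M] [Module (PolyRing n K) M]
    {ℳ : Option ℕ → AddSubgroup M} (h : HasRes (n := n) (K := K) k r M ℳ) (hk : k ≤ k') :
    HasRes (n := n) (K := K) k' r M ℳ := by
  induction k', hk using Nat.le_induction with
  | base => exact h
  | succ k' _ ih => exact ih.succ

lemma map_mem_gr {ι : Type} [Fintype ι] [DecidableEq ι] {s : ι → ℕ}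
    {M : Type} [AddCommGroup M] [Module (PolyRing n K) M]
    {ℳ : Option ℕ → AddSubgroup M} (hM : IsGr (n := n) (K := K) ℳ)
    (f : (ι → PolyRing n K) →ₗ[PolyRing n K] M) (hg : ∀ i, f (Pi.single i 1) ∈ ℳ (some (s i)))
    {t : Option ℕ} {v : ι → PolyRing n K} (hv : v ∈ freeGr s t) : f v ∈ ℳ t := by
  cases t with
  | none => rw [hM.none_eq]; trivial
  | some d =>
    have : f v = ∑ i, v i • f (Pi.single i 1) := by
      conv_lhs => rw [← Finset.univ_sum_single v]
      rw [map_sum]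
      refine Finset.sum_congr rfl fun i _ => ?_
      rw [← map_smul, ← Pi.single_smul, smul_eq_mul, mul_one]
    rw [this]
    refine sum_mem fun i _ => ?_
    rcases hv i with h | ⟨e, rfl, h⟩
    · simp [h]
    · exact hM.smul_mem _ _ _ _ h (hg i)

/-- `0 → A → B → C → 0` is a short exact sequence of graded modules: the maps preserve degrees, the
grading of `A` is the one induced from `B`, and `B → C` is surjective in each degree. -/
structure IsSES {A B C : Type} [AddCommGroup A] [Module (PolyRing n K) A]
    [AddCommGroup B] [Module (PolyRing n K) B] [AddCommGroup C] [Module (PolyRing n K) C]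
    (𝒜 : Option ℕ → AddSubgroup A) (ℬ : Option ℕ → AddSubgroup B)
    (𝒞 : Option ℕ → AddSubgroup C)
    (i : A →ₗ[PolyRing n K] B) (p : B →ₗ[PolyRing n K] C) : Prop where
  inj : Function.Injective i
  comp : ∀ a, p (i a) = 0
  exact : ∀ b, p b = 0 → ∃ a, i a = b
  mem_iff : ∀ t a, i a ∈ ℬ t ↔ a ∈ 𝒜 t
  map_mem : ∀ t, ∀ b ∈ ℬ t, p b ∈ 𝒞 t
  surj : ∀ t, ∀ c ∈ 𝒞 t, ∃ b ∈ ℬ t, p b = c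

lemma mem_freeGr_sum {α β : Type} {s : α → ℕ} {s' : β → ℕ} {t : Option ℕ}
    {v : α ⊕ β → PolyRing n K} :
    v ∈ freeGr (Sum.elim s s') t ↔ v ∘ Sum.inl ∈ freeGr s t ∧ v ∘ Sum.inr ∈ freeGr s' t := by
  cases t with
  | none => exact ⟨fun _ => ⟨trivial, trivial⟩, fun _ => trivial⟩
  | some d =>
    exact ⟨fun h => ⟨fun i => h (Sum.inl i), fun i => h (Sum.inr i)⟩,
      fun h i => Sum.casesOn i h.1 h.2⟩

/-- The horseshoe lemma: in a short exact sequence, the direct sum of resolutions of the outer terms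
gives a resolution of the middle term. -/
lemma HasRes.horseshoe {k r : ℕ} {A B C : Type} [AddCommGroup A] [Module (PolyRing n K) A]
    [AddCommGroup B] [Module (PolyRing n K) B] [AddCommGroup C] [Module (PolyRing n K) C]
    {𝒜 : Option ℕ → AddSubgroup A} {ℬ : Option ℕ → AddSubgroup B}
    {𝒞 : Option ℕ → AddSubgroup C}
    {i : A →ₗ[PolyRing n K] B} {p : B →ₗ[PolyRing n K] C}
    (hB : IsGr (n := n) (K := K) ℬ) (hS : IsSES 𝒜 ℬ 𝒞 i p)
    (hA : HasRes (n := n) (K := K) k r A 𝒜) (hC : HasRes (n := n) (K := K) k r C 𝒞) :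
    HasRes (n := n) (K := K) k r B ℬ := by
  induction k generalizing r A B C with
  | zero =>
    have : Subsingleton A := hA
    have : Subsingleton C := hC
    refine ⟨fun b b' => ?_⟩
    obtain ⟨a, ha⟩ := hS.exact (b - b') (Subsingleton.elim _ _)
    rw [Subsingleton.elim a 0, map_zero] at ha
    exact (sub_eq_zero.1 ha.symm)
  | succ k ih =>
    obtain ⟨α, _, _, s, f, hs, hg, hf, hk⟩ := hA
    obtain ⟨β, _, _, s', f', hs', hg', hf', hkC⟩ := hC
    -- a degree-preserving lift `g` of `f'` to `B`
    choose b hb hpb using fun j => hS.surj _ _ (hg' j)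
    let g : (β → PolyRing n K) →ₗ[PolyRing n K] B := (Pi.basisFun (PolyRing n K) β).constr (PolyRing n K) b
    have hgb : ∀ j, g (Pi.single j 1) = b j := fun j => by
      rw [← Pi.basisFun_apply]
      exact (Pi.basisFun (PolyRing n K) β).constr_basis (PolyRing n K) b j
    have hpg : ∀ v, p (g v) = f' v := by
      intro v
      have : p ∘ₗ g = f' := by
        refine (Pi.basisFun (PolyRing n K) β).ext fun j => ?_
        simp [hgb, hpb]
      exact LinearMap.congr_fun this v
    let F : (α ⊕ β → PolyRing n K) →ₗ[PolyRing n K] B :=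
      i ∘ₗ f ∘ₗ LinearMap.funLeft _ _ Sum.inl + g ∘ₗ LinearMap.funLeft _ _ Sum.inr
    have hF : ∀ v, F v = i (f (v ∘ Sum.inl)) + g (v ∘ Sum.inr) := fun v => rfl
    have hpF : ∀ v, p (F v) = f' (v ∘ Sum.inr) := fun v => by
      rw [hF, map_add, hS.comp, hpg, zero_add]
    have hgm : ∀ t v, v ∈ freeGr s' t → g v ∈ ℬ t := fun t v hv =>
      map_mem_gr hB g (fun j => (hgb j).symm ▸ hb j) hv
    -- used twice: for the surjectivity of `F`, and for that of `ker F → ker f'` (with `x = 0`)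
    have key : ∀ t, ∀ x ∈ ℬ t, ∀ v ∈ freeGr s' t, p x = f' v →
        ∃ u ∈ freeGr s t, F (Sum.elim u v) = x := by
      intro t x hx v hv hxv
      obtain ⟨a, ha⟩ := hS.exact (x - g v) (by rw [map_sub, hpg, hxv, sub_self])
      obtain ⟨u, hu, rfl⟩ := hf t a
        ((hS.mem_iff t a).1 (ha ▸ sub_mem hx (hgm t v hv)))
      refine ⟨u, hu, ?_⟩
      rw [hF]
      change i (f u) + g v = x
      rw [ha, sub_add_cancel]
    refine ⟨α ⊕ β, inferInstance, inferInstance, Sum.elim s s', F, ?_, ?_, ?_, ?_⟩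
    · rintro (j | j)
      exacts [hs j, hs' j]
    · rintro (j | j)
      · have h1 : (Pi.single (Sum.inl j) 1 : α ⊕ β → PolyRing n K) ∘ Sum.inl = Pi.single j 1 := by
          ext l; simp [Pi.single_apply]
        have h2 : (Pi.single (Sum.inl j) 1 : α ⊕ β → PolyRing n K) ∘ Sum.inr = 0 := by
          ext l; simp
        rw [hF, h1, h2, map_zero, add_zero]
        exact (hS.mem_iff _ _).2 (hg j)
      · have h1 : (Pi.single (Sum.inr j) 1 : α ⊕ β → PolyRing n K) ∘ Sum.inr = Pi.single j 1 := by
          ext l; simp [Pi.single_apply]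
        have h2 : (Pi.single (Sum.inr j) 1 : α ⊕ β → PolyRing n K) ∘ Sum.inl = 0 := by
          ext l; simp
        rw [hF, h1, h2, map_zero, map_zero, zero_add, hgb]
        exact hb j
    · intro t x hx
      obtain ⟨v, hv, hvx⟩ := hf' t _ (hS.map_mem t x hx)
      obtain ⟨u, hu, h⟩ := key t x hx v hv hvx.symm
      exact ⟨Sum.elim u v, mem_freeGr_sum.2 ⟨hu, hv⟩, h⟩
    · let i' : LinearMap.ker f →ₗ[PolyRing n K] LinearMap.ker F :=
        { toFun := fun u => ⟨Sum.elim u.1 0, by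
            have h1 : f u.1 = 0 := u.2
            rw [LinearMap.mem_ker, hF]
            change i (f u.1) + g 0 = 0
            rw [h1, map_zero, map_zero, add_zero]⟩
          map_add' := fun u v => by
            ext1
            funext j
            cases j <;> simp
          map_smul' := fun c v => by
            ext1
            funext j
            cases j <;> simp }
      let p' : LinearMap.ker F →ₗ[PolyRing n K] LinearMap.ker f' :=
        { toFun := fun v => ⟨v.1 ∘ Sum.inr, by
            have h1 : F v.1 = 0 := v.2
            rw [LinearMap.mem_ker, ← hpF, h1, map_zero]⟩
          map_add' := fun u v => rfl
          map_smul' := fun c v => rfl }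
      refine ih (i := i') (p := p') ((isGr_freeGr _).sub _) ?_ hk hkC
      refine ⟨?_, ?_, ?_, ?_, ?_, ?_⟩
      · intro u v h
        ext1
        funext j
        exact congrFun (congrArg Subtype.val h) (Sum.inl j)
      · intro a
        rfl
      · intro v hv
        have hv' : v.1 ∘ Sum.inr = 0 := congrArg Subtype.val hv
        have hFv : F v.1 = 0 := v.2
        rw [hF, hv', map_zero, add_zero] at hFv
        refine ⟨⟨v.1 ∘ Sum.inl, hS.inj (by rw [hFv, map_zero])⟩, ?_⟩
        ext1
        funext j
        cases j with
        | inl j => rfl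
        | inr j => exact (congrFun hv' j).symm
      · intro t a
        rw [mem_subGr, mem_subGr]
        exact mem_freeGr_sum.trans ⟨fun h => h.1, fun h => ⟨h, zero_mem _⟩⟩
      · intro t v hv
        exact (mem_freeGr_sum.1 (mem_subGr.1 hv)).2
      · intro t v hv
        obtain ⟨u, hu, h⟩ := key t 0 (zero_mem _) v.1 hv (by
          have h1 : f' v.1 = 0 := v.2
          rw [h1, map_zero])
        exact ⟨⟨Sum.elim u v.1, h⟩, mem_subGr.2 (mem_freeGr_sum.2 ⟨hu, hv⟩), rfl⟩

/-- In a short exact sequence `0 → A → B → C → 0`, a resolution of `C` is obtained from one of `B`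
and one of `A` shifted by one step, so a bound `r + 1` for `A` suffices. With `F → B` the first step
for `B`, the kernel of `F → C` is an extension of `A` by the kernel of `F → B`, which reduces the
claim to the horseshoe lemma. -/
lemma HasRes.cone {k r : ℕ} {A B C : Type} [AddCommGroup A] [Module (PolyRing n K) A]
    [AddCommGroup B] [Module (PolyRing n K) B] [AddCommGroup C] [Module (PolyRing n K) C]
    {𝒜 : Option ℕ → AddSubgroup A} {ℬ : Option ℕ → AddSubgroup B}
    {𝒞 : Option ℕ → AddSubgroup C}
    {i : A →ₗ[PolyRing n K] B} {p : B →ₗ[PolyRing n K] C}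
    (hB : IsGr (n := n) (K := K) ℬ) (hS : IsSES 𝒜 ℬ 𝒞 i p)
    (hA : HasRes (n := n) (K := K) k (r + 1) A 𝒜)
    (hB' : HasRes (n := n) (K := K) (k + 1) r B ℬ) :
    HasRes (n := n) (K := K) (k + 1) r C 𝒞 := by
  obtain ⟨β, _, _, s, f, hs, hg, hf, hk⟩ := hB'
  have hfm : ∀ t v, v ∈ freeGr s t → f v ∈ ℬ t := fun t v hv => map_mem_gr hB f hg hv
  refine ⟨β, inferInstance, inferInstance, s, p ∘ₗ f, hs, fun j => hS.map_mem _ _ (hg j), ?_, ?_⟩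
  · intro t c hc
    obtain ⟨b, hb, rfl⟩ := hS.surj t c hc
    obtain ⟨v, hv, rfl⟩ := hf t b hb
    exact ⟨v, hv, rfl⟩
  -- `f` maps the kernel of `p ∘ f` into `A`; this is the quotient map of the extension
  · choose q hq using fun v : LinearMap.ker (p ∘ₗ f) => hS.exact (f v.1) v.2
    let q' : LinearMap.ker (p ∘ₗ f) →ₗ[PolyRing n K] A :=
      { toFun := q
        map_add' := fun u v => hS.inj (by
          rw [hq, map_add, hq, hq, Submodule.coe_add, map_add])
        map_smul' := fun c v => hS.inj (by
          rw [hq, RingHom.id_apply, map_smul, hq, Submodule.coe_smul, map_smul]) }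
    have hq' : ∀ v, i (q' v) = f v.1 := hq
    let j : LinearMap.ker f →ₗ[PolyRing n K] LinearMap.ker (p ∘ₗ f) :=
      Submodule.inclusion (LinearMap.ker_le_ker_comp f p)
    refine HasRes.horseshoe (i := j) (p := q') ((isGr_freeGr _).sub _) ?_ hk hA
    refine ⟨Submodule.inclusion_injective _, ?_, ?_, ?_, ?_, ?_⟩
    · intro a
      refine hS.inj ?_
      rw [hq', map_zero]
      exact a.2
    · intro v hv
      have : f v.1 = 0 := by rw [← hq', hv, map_zero]
      exact ⟨⟨v.1, this⟩, rfl⟩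
    · intro t a
      exact Iff.rfl
    · intro t v hv
      exact (hS.mem_iff _ _).1 (by rw [hq']; exact hfm t _ hv)
    · intro t a ha
      obtain ⟨v, hv, h⟩ := hf t (i a) ((hS.mem_iff _ _).2 ha)
      refine ⟨⟨v, ?_⟩, hv, hS.inj ?_⟩
      · rw [LinearMap.mem_ker, LinearMap.comp_apply, h, hS.comp]
      · rw [hq', h]

/-- Passing from `M` to `M(-1)`: an isomorphism raising degrees by one, onto a module vanishing in
degree `0`, raises the degree bound by one. -/
lemma HasRes.shift {k r : ℕ} {M N : Type} [AddCommGroup M] [Module (PolyRing n K) M]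
    [AddCommGroup N] [Module (PolyRing n K) N]
    {ℳ : Option ℕ → AddSubgroup M} {𝒩 : Option ℕ → AddSubgroup N}
    (hM : IsGr (n := n) (K := K) ℳ)
    (φ : M ≃ₗ[PolyRing n K] N) (h0 : ∀ m, φ m ∈ 𝒩 (some 0) → m = 0)
    (hφ : ∀ d m, φ m ∈ 𝒩 (some (d + 1)) ↔ m ∈ ℳ (some d))
    (h : HasRes (n := n) (K := K) k r M ℳ) : HasRes (n := n) (K := K) k (r + 1) N 𝒩 := by
  induction k generalizing r M N with
  | zero =>
    have : Subsingleton M := h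
    exact φ.symm.injective.subsingleton
  | succ k ih =>
    obtain ⟨ι, _, _, s, f, hs, hg, hf, hk⟩ := h
    have hsh : ∀ d (v : ι → PolyRing n K),
        v ∈ freeGr (fun i => s i + 1) (some (d + 1)) ↔ v ∈ freeGr s (some d) := by
      intro d v
      refine forall_congr' fun i => or_congr Iff.rfl (exists_congr fun e => and_congr ?_ Iff.rfl)
      change d + 1 = s i + 1 + e ↔ d = s i + e
      omega
    refine ⟨ι, inferInstance, inferInstance, fun i => s i + 1, φ.toLinearMap ∘ₗ f,
      fun i => Nat.succ_le_succ (hs i), fun i => (hφ _ _).2 (hg i), ?_, ?_⟩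
    · rintro (_ | _ | d) m hm
      · obtain ⟨v, -, hv⟩ := hf none (φ.symm m) (by rw [hM.none_eq]; trivial)
        exact ⟨v, trivial, by simp [hv]⟩
      · obtain ⟨m, rfl⟩ := φ.surjective m
        rw [h0 m hm]
        exact ⟨0, zero_mem _, by simp⟩
      · obtain ⟨m, rfl⟩ := φ.surjective m
        obtain ⟨v, hv, rfl⟩ := hf _ _ ((hφ d m).1 hm)
        exact ⟨v, (hsh d v).2 hv, rfl⟩
    · refine ih ((isGr_freeGr s).sub _) (LinearEquiv.ofEq _ _ (LinearEquiv.ker_comp φ f).symm)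
        ?_ ?_ hk
      · intro m hm
        ext1
        funext i
        rcases hm i with h | ⟨e, he, -⟩
        · exact h
        · change 0 = s i + 1 + e at he
          omega
      · intro d m
        exact hsh d m.1

/-! ### Regularity bounds for homogeneous ideals -/

/-- The standard grading of `S`, in the `Option ℕ` encoding. -/
noncomputable def polyGr (n : ℕ) (K : Type) [Field K] : Option ℕ → AddSubgroup (PolyRing n K)
  | none => ⊤
  | some d => (homogeneousSubmodule (Fin n) K d).toAddSubgroup

lemma isGr_polyGr : IsGr (n := n) (K := K) (polyGr n K) where
  none_eq := rfl
  smul_mem p e d m hp hm := by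
    rw [add_comm]
    exact hp.mul hm

attribute [local instance] MvPolynomial.gradedAlgebra

/-- `reg I ≤ r` in constructive form: `I` is homogeneous, and it has a finite graded free resolution
whose `i`-th module is generated in degrees at most `r + i`. -/
def RegLE (r : ℕ) (I : Ideal (PolyRing n K)) : Prop :=
  I.IsHomogeneous (homogeneousSubmodule (Fin n) K) ∧ ∃ k, HasRes (n := n) (K := K) k r I (subGr (polyGr n K) I)

lemma RegLE.mono {r r' : ℕ} {I : Ideal (PolyRing n K)} (h : RegLE r I) (hr : r ≤ r') :
    RegLE r' I :=
  ⟨h.1, h.2.imp fun _ hk => hk.mono hr⟩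

lemma regLE_bot (r : ℕ) : RegLE r (⊥ : Ideal (PolyRing n K)) := by
  refine ⟨Ideal.IsHomogeneous.bot _, 0, ?_⟩
  change Subsingleton (⊥ : Ideal (PolyRing n K))
  infer_instance

lemma regLE_top (r : ℕ) : RegLE r (⊤ : Ideal (PolyRing n K)) := by
  refine ⟨Ideal.IsHomogeneous.top _, 1, Unit, inferInstance, inferInstance, fun _ => 0,
    LinearMap.codRestrict _ (LinearMap.proj ()) (fun _ => trivial), fun _ => Nat.zero_le _,
    fun _ => ?_, ?_, ?_⟩
  · rw [mem_subGr]
    change (Pi.single () (1 : PolyRing n K) : Unit → PolyRing n K) () ∈ _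
    rw [Pi.single_eq_same]
    exact isHomogeneous_one _ _
  · intro t m hm
    refine ⟨fun _ => m.1, ?_, rfl⟩
    cases t with
    | none => trivial
    | some d => exact fun _ => Or.inr ⟨d, (zero_add d).symm, hm⟩
  · refine ⟨fun a b => ?_⟩
    have h : ∀ c : LinearMap.ker (LinearMap.codRestrict (⊤ : Ideal (PolyRing n K))
        (LinearMap.proj (R := PolyRing n K) (φ := fun _ : Unit => PolyRing n K) ())
        (fun _ => trivial)), c = 0 := by
      intro c
      ext1
      funext i
      exact congrArg Subtype.val (LinearMap.mem_ker.1 c.2)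
    rw [h a, h b]

lemma isHomogeneous_X_mul {x : Fin n} {p : PolyRing n K} {d : ℕ} :
    (X x * p).IsHomogeneous (d + 1) ↔ p.IsHomogeneous d := by
  refine ⟨fun h m hm => ?_, fun h => ?_⟩
  · have := @h (Finsupp.single x 1 + m) (by rwa [coeff_X_mul])
    rw [map_add, Finsupp.weight_single] at this
    simp only [Pi.one_apply, smul_eq_mul, mul_one] at this
    omega
  · rw [add_comm]
    exact (isHomogeneous_X K x).mul h

lemma eq_zero_of_X_mul {x : Fin n} {p : PolyRing n K} (h : (X x * p).IsHomogeneous 0) :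
    p = 0 := by
  ext m
  by_contra hm
  have := @h (Finsupp.single x 1 + m) (by rwa [coeff_X_mul])
  rw [map_add, Finsupp.weight_single] at this
  simp at this

/-- As graded modules, `x J` and `J(-1)` are isomorphic. -/
lemma HasRes.span_X_mul {k r : ℕ} {x : Fin n} {J : Ideal (PolyRing n K)}
    (h : HasRes (n := n) (K := K) k r J (subGr (polyGr n K) J)) :
    HasRes (n := n) (K := K) k (r + 1) (Ideal.span {X x} * J : Ideal (PolyRing n K))
      (subGr (polyGr n K) (Ideal.span {X x} * J)) := by
  let f : J →ₗ[PolyRing n K] (Ideal.span {X x} * J : Ideal (PolyRing n K)) :=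
    LinearMap.codRestrict _ ((LinearMap.mulLeft (PolyRing n K) (X x : PolyRing n K)) ∘ₗ Submodule.subtype J)
      (fun z => Ideal.mem_span_singleton_mul.2 ⟨z.1, z.2, rfl⟩)
  have hf : ∀ z, (f z).1 = X x * z.1 := fun z => rfl
  have hb : Function.Bijective f := by
    constructor
    · intro a b hab
      ext1
      have := congrArg Subtype.val hab
      rw [hf, hf] at this
      exact mul_left_cancel₀ (X_ne_zero x) this
    · rintro ⟨y, hy⟩
      obtain ⟨z, hz, rfl⟩ := Ideal.mem_span_singleton_mul.1 hy
      exact ⟨⟨z, hz⟩, rfl⟩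
  refine HasRes.shift (isGr_polyGr.sub J) (LinearEquiv.ofBijective f hb) ?_ ?_ h
  · intro m hm
    ext1
    exact eq_zero_of_X_mul hm
  · intro d m
    exact isHomogeneous_X_mul

/-- A bound for `I + J` from the Mayer-Vietoris sequence `0 → I ∩ J → I ⊕ J → I + J → 0`. -/
lemma hasRes_sup {k r : ℕ} {I J : Ideal (PolyRing n K)}
    (hI : I.IsHomogeneous (homogeneousSubmodule (Fin n) K))
    (hJ : J.IsHomogeneous (homogeneousSubmodule (Fin n) K))
    (h1 : HasRes (n := n) (K := K) (k + 1) r I (subGr (polyGr n K) I))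
    (h2 : HasRes (n := n) (K := K) (k + 1) r J (subGr (polyGr n K) J))
    (h3 : HasRes (n := n) (K := K) k (r + 1) (I ⊓ J : Ideal (PolyRing n K)) (subGr (polyGr n K) (I ⊓ J))) :
    HasRes (n := n) (K := K) (k + 1) r (I ⊔ J : Ideal (PolyRing n K)) (subGr (polyGr n K) (I ⊔ J)) := by
  let ℰ : Option ℕ → AddSubgroup (I × J) :=
    fun t => (subGr (polyGr n K) I t).prod (subGr (polyGr n K) J t)
  have hP : IsGr (n := n) (K := K) ℰ :=
    ⟨by
      ext ⟨a, b⟩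
      simp [ℰ, (isGr_polyGr.sub I).none_eq, (isGr_polyGr.sub J).none_eq],
      fun p e d m hp hm =>
      ⟨(isGr_polyGr.sub I).smul_mem p e d _ hp hm.1,
        (isGr_polyGr.sub J).smul_mem p e d _ hp hm.2⟩⟩
  have hS1 : IsSES (subGr (polyGr n K) I) ℰ (subGr (polyGr n K) J)
      (LinearMap.inl (PolyRing n K) I J) (LinearMap.snd (PolyRing n K) I J) :=
    { inj := LinearMap.inl_injective
      comp := fun _ => rfl
      exact := fun b hb => ⟨b.1, Prod.ext rfl hb.symm⟩
      mem_iff := fun t a => ⟨fun h => h.1, fun h => ⟨h, zero_mem _⟩⟩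
      map_mem := fun t b hb => hb.2
      surj := fun t c hc => ⟨(0, c), ⟨zero_mem _, hc⟩, rfl⟩ }
  have hB := HasRes.horseshoe hP hS1 h1 h2
  let i : (I ⊓ J : Ideal (PolyRing n K)) →ₗ[PolyRing n K] I × J :=
    LinearMap.prod (Submodule.inclusion inf_le_left) (-Submodule.inclusion inf_le_right)
  let p : I × J →ₗ[PolyRing n K] (I ⊔ J : Ideal (PolyRing n K)) :=
    LinearMap.coprod (Submodule.inclusion le_sup_left) (Submodule.inclusion le_sup_right)
  have hi : ∀ a, i a = (⟨a.1, a.2.1⟩, -⟨a.1, a.2.2⟩) := fun a => rfl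
  have hp : ∀ b, (p b).1 = b.1.1 + b.2.1 := fun b => rfl
  refine HasRes.cone (i := i) (p := p) hP ?_ h3 hB
  refine ⟨?_, ?_, ?_, ?_, ?_, ?_⟩
  · intro a b hab
    ext1
    exact congrArg (fun z => z.1.1) hab
  · intro a
    ext1
    rw [hp, hi]
    simp
  · rintro ⟨⟨a, ha⟩, ⟨b, hb⟩⟩ hab
    have h : a + b = 0 := congrArg Subtype.val hab
    obtain rfl : b = -a := eq_neg_of_add_eq_zero_right h
    exact ⟨⟨a, ha, by simpa using hb⟩, rfl⟩
  · intro t a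
    exact ⟨fun h => h.1, fun h => ⟨h, (subGr (polyGr n K) J t).neg_mem
      (x := (⟨a.1, a.2.2⟩ : J)) h⟩⟩
  · intro t b hb
    exact add_mem (S := AddSubgroup (PolyRing n K)) hb.1 hb.2
  · rintro (_ | d) ⟨c, hc⟩ hcd
    · obtain ⟨a, ha, b, hb, rfl⟩ := Submodule.mem_sup.1 hc
      exact ⟨(⟨a, ha⟩, ⟨b, hb⟩), ⟨trivial, trivial⟩, rfl⟩
    -- in degree `d`, replace the two summands by their homogeneous components of degree `d`
    · obtain ⟨a, ha, b, hb, rfl⟩ := Submodule.mem_sup.1 hc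
      have ha' : homogeneousComponent d a ∈ I := homogeneousComponent_mem_of_mem hI ha d
      have hb' : homogeneousComponent d b ∈ J := homogeneousComponent_mem_of_mem hJ hb d
      refine ⟨(⟨_, ha'⟩, ⟨_, hb'⟩), ⟨homogeneousComponent_isHomogeneous d a,
        homogeneousComponent_isHomogeneous d b⟩, ?_⟩
      ext1
      rw [hp]
      change homogeneousComponent d a + homogeneousComponent d b = a + b
      rw [← map_add]
      have hcd' : a + b ∈ homogeneousSubmodule (Fin n) K d := hcd
      rw [homogeneousComponent_of_mem hcd', if_pos rfl]

/-- The inductive step for the regularity: `I + x J` is obtained from `I`, of regularity at most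
`r + 1`, and `x J`, of regularity at most `r + 1`, along `I ∩ x J`. Since `x` is a nonzerodivisor
modulo `I` and `I ⊆ J`, this intersection is `x I`, of regularity at most `r + 2`. -/
lemma RegLE.sup_X_mul {r : ℕ} {I J : Ideal (PolyRing n K)} {x : Fin n}
    (hI : RegLE (r + 1) I) (hJ : RegLE r J) (hIJ : I ≤ J)
    (hx : ∀ p, X x * p ∈ I → p ∈ I) : RegLE (r + 1) (I ⊔ Ideal.span {X x} * J) := by
  obtain ⟨hI, k, hk⟩ := hI
  obtain ⟨hJ, l, hl⟩ := hJ
  have hxh : (Ideal.span {X x} : Ideal (PolyRing n K)).IsHomogeneous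
      (homogeneousSubmodule (Fin n) K) :=
    Ideal.homogeneous_span _ _ (by
      rintro _ rfl
      exact ⟨1, isHomogeneous_X K x⟩)
  have hinf : I ⊓ Ideal.span {X x} * J = Ideal.span {X x} * I := by
    refine le_antisymm ?_ (le_inf Ideal.mul_le_right (Ideal.mul_mono_right hIJ))
    rintro p ⟨hp, hp'⟩
    obtain ⟨z, hz, rfl⟩ := Ideal.mem_span_singleton_mul.1 hp'
    exact Ideal.mem_span_singleton_mul.2 ⟨z, hx z hp, rfl⟩
  refine ⟨hI.sup (hxh.mul hJ), max k l + 1, hasRes_sup hI (hxh.mul hJ) (hk.le (by omega))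
    (hl.span_X_mul.le (by omega)) ?_⟩
  rw [hinf]
  exact hk.span_X_mul.le (le_max_left k l)

/-! ### From recursive resolutions to `GradedFreeRes` -/

/-- A stage in building a resolution step by step: the free module `⨁_i S(-s i)` reached last,
together with the submodule `N` still to be resolved and a resolution of `N`. -/
structure ResStage (n : ℕ) (K : Type) [Field K] where
  ι : Type
  fin : Fintype ι
  dec : DecidableEq ι
  s : ι → ℕ
  N : Submodule (PolyRing n K) (ι → PolyRing n K)
  k : ℕ
  r : ℕ
  hasRes : HasRes (n := n) (K := K) k r N (subGr (freeGr s) N)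

attribute [instance] ResStage.fin ResStage.dec

/-- One step of the construction: a free module mapping onto `N`, together with the kernel of that
map. Once `N = 0` the free module is zero, so the construction can be continued forever. -/
lemma ResStage.exists_next (σ : ResStage n K) : ∃ (τ : ResStage n K)
    (d : (τ.ι → PolyRing n K) →ₗ[PolyRing n K] (σ.ι → PolyRing n K)),
    LinearMap.range d = σ.N ∧ LinearMap.ker d = τ.N ∧
    (∀ b, d (Pi.single b 1) ∈ freeGr σ.s (some (τ.s b))) ∧ (∀ b, τ.s b ≤ σ.r) ∧
    τ.r = σ.r + 1 ∧ τ.k = σ.k - 1 ∧ (σ.k = 0 → IsEmpty τ.ι) := by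
  obtain ⟨ι, hfin, hdec, s, N, k, r, h⟩ := σ
  cases k with
  | zero =>
    have hN : Subsingleton N := h
    refine ⟨⟨Empty, inferInstance, inferInstance, Empty.elim, ⊥, 0, r + 1, ?_⟩, 0, ?_, ?_,
      fun b => b.elim, fun b => b.elim, rfl, rfl, fun _ => (inferInstance : IsEmpty Empty)⟩
    · change Subsingleton (⊥ : Submodule (PolyRing n K) (Empty → PolyRing n K))
      infer_instance
    · rw [LinearMap.range_zero]
      exact ((Submodule.subsingleton_iff_eq_bot).1 hN).symm
    · exact Subsingleton.elim _ _
  | succ k =>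
    obtain ⟨κ, _, _, s', f, hs, hg, hf, hk⟩ := h
    refine ⟨⟨κ, inferInstance, inferInstance, s', LinearMap.ker f, k, r + 1, hk⟩,
      N.subtype ∘ₗ f, ?_, ?_, hg, hs, rfl, rfl, fun h => absurd h (Nat.succ_ne_zero _)⟩
    · have : Function.Surjective f := fun m => by
        obtain ⟨v, -, hv⟩ := hf none m trivial
        exact ⟨v, hv⟩
      rw [LinearMap.range_comp, LinearMap.range_eq_top.2 this, Submodule.map_top,
        Submodule.range_subtype]
    · rw [LinearMap.ker_comp, Submodule.ker_subtype]
      rfl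

/-- The stages, started from the first step of a resolution of `I` and iterated, assemble into a
`GradedFreeRes`; the index types are transported to `Fin` by arbitrary bijections. -/
lemma RegLE.exists_gradedFreeRes {r : ℕ} {I : Ideal (PolyRing n K)} (h : RegLE r I) :
    ∃ F : GradedFreeRes K I, ∀ i, ∀ a : Fin (F.rank i), (F.shift i a : ℤ) - (i : ℤ) ≤ r := by
  obtain ⟨-, k, hk⟩ := h
  -- lengthening the resolution ensures that it has a first step
  obtain ⟨κ, _, _, s, f, hs, hg, hf, hk⟩ := hk.succ
  choose next d hrange hker hmem hle hr hk' hempty using ResStage.exists_next (n := n) (K := K)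
  let st : ℕ → ResStage n K := fun i => Nat.rec (motive := fun _ => ResStage n K)
    ⟨κ, inferInstance, inferInstance, s, LinearMap.ker f, k, r + 1, hk⟩ (fun _ => next) i
  have hst : ∀ i : ℕ, st (i + 1) = next (st i) := fun i => rfl
  have hstr : ∀ i : ℕ, (st i).r = r + 1 + i := by
    intro i
    induction i with
    | zero => rfl
    | succ i ih => rw [hst, hr, ih]; rfl
  have hstk : ∀ i : ℕ, (st i).k = k - i := by
    intro i
    induction i with
    | zero => rfl
    | succ i ih => rw [hst, hk', ih]; rfl
  let e : ∀ i : ℕ, (st i).ι ≃ Fin (Fintype.card (st i).ι) := fun i => Fintype.equivFin (st i).ι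
  let E : ∀ i : ℕ, (Fin (Fintype.card (st i).ι) → PolyRing n K) ≃ₗ[PolyRing n K]
      ((st i).ι → PolyRing n K) := fun i => LinearEquiv.funCongrLeft _ _ (e i)
  have hE : ∀ (i : ℕ) a, E i (Pi.single a 1) = Pi.single ((e i).symm a) 1 := by
    intro i a
    funext j
    change (Pi.single a 1 : _ → PolyRing n K) (e i j) = _
    simp only [Pi.single_apply, Equiv.eq_symm_apply]
  let D : ∀ i : ℕ, ((st (i + 1)).ι → PolyRing n K) →ₗ[PolyRing n K] ((st i).ι → PolyRing n K) :=
    fun i => d (st i)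
  have hrD : ∀ i : ℕ, LinearMap.range (D i) = (st i).N := fun i => hrange (st i)
  have hkD : ∀ i : ℕ, LinearMap.ker (D i) = (st (i + 1)).N := fun i => hker (st i)
  have hker_range : ∀ (i : ℕ) {P : Type} [AddCommGroup P] [Module (PolyRing n K) P]
      (g : ((st i).ι → PolyRing n K) →ₗ[PolyRing n K] P), LinearMap.ker g = (st i).N →
      LinearMap.ker (g ∘ₗ (E i).toLinearMap) =
        LinearMap.range ((E i).symm.toLinearMap ∘ₗ D i ∘ₗ (E (i + 1)).toLinearMap) := by
    intro i P _ _ g hg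
    ext v
    rw [LinearMap.mem_ker, LinearMap.comp_apply, ← LinearMap.mem_ker, hg, ← hrD,
      LinearMap.mem_range, LinearMap.mem_range]
    constructor
    · rintro ⟨w, hw⟩
      exact ⟨(E (i + 1)).symm w, by simp [hw]⟩
    · rintro ⟨w, rfl⟩
      exact ⟨E (i + 1) w, by simp⟩
  refine ⟨{
    len := k
    rank := fun i => Fintype.card (st i).ι
    rank_zero := ?_
    shift := fun i a => (st i).s ((e i).symm a)
    d := fun i => (E i).symm.toLinearMap ∘ₗ D i ∘ₗ (E (i + 1)).toLinearMap
    aug := (Submodule.subtype I ∘ₗ f) ∘ₗ (E 0).toLinearMap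
    aug_range := ?_
    exact_zero := ?_
    exact_succ := ?_
    homog_aug := ?_
    homog_d := ?_ }, ?_⟩
  · rintro (_ | i) hi
    · omega
    · have := hempty (st i) (by rw [hstk]; omega)
      exact Fintype.card_eq_zero_iff.2 this
  · have : Function.Surjective f := fun m => by
      obtain ⟨v, -, hv⟩ := hf none m trivial
      exact ⟨v, hv⟩
    rw [LinearEquiv.range_comp, LinearMap.range_comp, LinearMap.range_eq_top.2 this,
      Submodule.map_top, Submodule.range_subtype]
  · refine hker_range 0 _ ?_
    rw [LinearMap.ker_comp, Submodule.ker_subtype]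
    rfl
  · intro i
    rw [← hker_range (i + 1) (D i) (hkD i), ← LinearMap.comp_assoc, LinearMap.comp_assoc,
      LinearEquiv.ker_comp]
  · intro a
    rw [LinearMap.comp_apply, LinearEquiv.coe_coe, hE]
    exact hg _
  · intro i b a
    have := hmem (st i) ((e (i + 1)).symm b) ((e i).symm a)
    have h2 : ((E i).symm.toLinearMap ∘ₗ D i ∘ₗ (E (i + 1)).toLinearMap) (Pi.single b 1) a =
        d (st i) (Pi.single ((e (i + 1)).symm b) 1) ((e i).symm a) :=
      congrFun (congrArg (fun v => (E i).symm (D i v)) (hE (i + 1) b)) a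
    rw [h2]
    exact this
  · rintro (_ | i) a
    · have := hs ((e 0).symm a)
      change ((s ((e 0).symm a) : ℕ) : ℤ) - ((0 : ℕ) : ℤ) ≤ r
      omega
    · have := hle (st i) ((e (i + 1)).symm a)
      rw [hstr] at this
      change ((next (st i)).s ((e (i + 1)).symm a) : ℤ) - ((i + 1 : ℕ) : ℤ) ≤ r
      push_cast
      omega


/-! ### Edge ideals of induced subgraphs -/

/-- The ideal `I(G[W]) + (x_u : u ∈ U)`: the edge ideal of the subgraph of `G` induced on `W`,
extended to `S`, together with the variables indexed by `U`. -/
noncomputable def indIdeal (K : Type) [Field K] (G : SimpleGraph (Fin n)) (W U : Finset (Fin n)) :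
    Ideal (PolyRing n K) :=
  Ideal.span ({p | ∃ i ∈ W, ∃ j ∈ W, G.Adj i j ∧ p = X i * X j} ∪ {p | ∃ u ∈ U, p = X u})

variable {G : SimpleGraph (Fin n)} {W U : Finset (Fin n)}

lemma edge_mem_indIdeal {i j : Fin n} (hi : i ∈ W) (hj : j ∈ W) (h : G.Adj i j) :
    (X i * X j : PolyRing n K) ∈ indIdeal K G W U :=
  Ideal.subset_span (Or.inl ⟨i, hi, j, hj, h, rfl⟩)

lemma var_mem_indIdeal {u : Fin n} (hu : u ∈ U) : (X u : PolyRing n K) ∈ indIdeal K G W U :=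
  Ideal.subset_span (Or.inr ⟨u, hu, rfl⟩)

lemma indIdeal_le {I : Ideal (PolyRing n K)}
    (hE : ∀ i ∈ W, ∀ j ∈ W, G.Adj i j → (X i * X j : PolyRing n K) ∈ I)
    (hU : ∀ u ∈ U, (X u : PolyRing n K) ∈ I) : indIdeal K G W U ≤ I := by
  refine Ideal.span_le.2 ?_
  rintro p (⟨i, hi, j, hj, h, rfl⟩ | ⟨u, hu, rfl⟩)
  · exact hE i hi j hj h
  · exact hU u hu

/-- A variable occurring in no generator of the monomial ideal `I(G[W]) + (U)` is a nonzerodivisor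
modulo that ideal. -/
lemma mem_indIdeal_of_X_mul {x : Fin n} (hW : x ∉ W) (hU : x ∉ U) (p : PolyRing n K)
    (h : X x * p ∈ indIdeal K G W U) : p ∈ indIdeal K G W U := by
  have key : indIdeal K G W U = Ideal.span ((fun s => monomial s (1 : K)) ''
      ({s | ∃ i ∈ W, ∃ j ∈ W, G.Adj i j ∧ s = Finsupp.single i 1 + Finsupp.single j 1} ∪
        {s | ∃ u ∈ U, s = Finsupp.single u 1})) := by
    rw [indIdeal]
    congr 1
    ext q
    constructor
    · rintro (⟨i, hi, j, hj, h, rfl⟩ | ⟨u, hu, rfl⟩)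
      · exact ⟨_, Or.inl ⟨i, hi, j, hj, h, rfl⟩, by simp [X, monomial_mul]⟩
      · exact ⟨_, Or.inr ⟨u, hu, rfl⟩, rfl⟩
    · rintro ⟨_, ⟨i, hi, j, hj, h, rfl⟩ | ⟨u, hu, rfl⟩, rfl⟩
      · exact Or.inl ⟨i, hi, j, hj, h, by simp [X, monomial_mul]⟩
      · exact Or.inr ⟨u, hu, rfl⟩
  rw [key, mem_ideal_span_monomial_image] at h ⊢
  intro m hm
  obtain ⟨s, hs, hle⟩ := h (Finsupp.single x 1 + m) (by
    rw [mem_support_iff, coeff_X_mul]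
    exact mem_support_iff.1 hm)
  refine ⟨s, hs, fun y => ?_⟩
  by_cases hy : y = x
  · subst hy
    have : s y = 0 := by
      rcases hs with ⟨i, hi, j, hj, -, rfl⟩ | ⟨u, hu, rfl⟩
      · have h1 : i ≠ y := fun h => hW (h ▸ hi)
        have h2 : j ≠ y := fun h => hW (h ▸ hj)
        simp [h1, h2]
      · have h1 : u ≠ y := fun h => hU (h ▸ hu)
        simp [h1]
    rw [this]
    exact Nat.zero_le _
  · have := hle y
    rwa [Finsupp.add_apply, Finsupp.single_apply, if_neg (Ne.symm hy), zero_add] at this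

/-- Adding variables that do not occur in `I(G[W])` does not increase the regularity. -/
lemma regLE_indIdeal_add_vars {r : ℕ} (h : RegLE (r + 1) (indIdeal K G W ∅))
    (hd : Disjoint W U) : RegLE (r + 1) (indIdeal K G W U) := by
  induction U using Finset.induction_on with
  | empty => exact h
  | insert u U hu ih =>
    rw [Finset.disjoint_insert_right] at hd
    have := (ih hd.2).sup_X_mul (regLE_top r) le_top
      (mem_indIdeal_of_X_mul hd.1 hu)
    convert this using 1
    rw [Ideal.mul_top]
    refine le_antisymm (indIdeal_le (fun i hi j hj h => ?_) (fun v hv => ?_))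
      (sup_le (indIdeal_le (fun i hi j hj h => ?_) (fun v hv => ?_)) ?_)
    · exact Ideal.mem_sup_left (edge_mem_indIdeal hi hj h)
    · rcases Finset.mem_insert.1 hv with rfl | hv
      · exact Ideal.mem_sup_right (Ideal.mem_span_singleton_self _)
      · exact Ideal.mem_sup_left (var_mem_indIdeal hv)
    · exact edge_mem_indIdeal hi hj h
    · exact var_mem_indIdeal (Finset.mem_insert_of_mem hv)
    · rw [Ideal.span_singleton_le_iff_mem]
      exact var_mem_indIdeal (Finset.mem_insert_self _ _)

open Classical in
/-- The vertices of `W` other than `x` and its neighbours. -/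
noncomputable def awayFrom (G : SimpleGraph (Fin n)) (W : Finset (Fin n)) (x : Fin n) :
    Finset (Fin n) :=
  W.filter fun y => y ≠ x ∧ ¬ G.Adj x y

open Classical in
/-- The neighbours of `x` inside `W`. -/
noncomputable def nbrs (G : SimpleGraph (Fin n)) (W : Finset (Fin n)) (x : Fin n) :
    Finset (Fin n) :=
  W.filter (G.Adj x)

lemma mem_awayFrom {x y : Fin n} : y ∈ awayFrom G W x ↔ y ∈ W ∧ y ≠ x ∧ ¬ G.Adj x y := by
  simp only [awayFrom, Finset.mem_filter]

lemma mem_nbrs {x y : Fin n} : y ∈ nbrs G W x ↔ y ∈ W ∧ G.Adj x y := by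
  simp only [nbrs, Finset.mem_filter]

lemma indIdeal_erase_le (x : Fin n) : indIdeal K G (W.erase x) ∅ ≤
    indIdeal K G (awayFrom G W x) (nbrs G W x) := by
  refine indIdeal_le (fun i hi j hj h => ?_) (fun v hv => absurd hv (Finset.notMem_empty v))
  rw [Finset.mem_erase] at hi hj
  by_cases h1 : G.Adj x i
  · exact Ideal.mul_mem_right _ _ (var_mem_indIdeal (mem_nbrs.2 ⟨hi.2, h1⟩))
  by_cases h2 : G.Adj x j
  · exact Ideal.mul_mem_left _ _ (var_mem_indIdeal (mem_nbrs.2 ⟨hj.2, h2⟩))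
  exact edge_mem_indIdeal (mem_awayFrom.2 ⟨hi.2, hi.1, h1⟩) (mem_awayFrom.2 ⟨hj.2, hj.1, h2⟩) h

/-- Splitting off a vertex: `I(G[W]) = I(G[W \ x]) + x · (I(G[W \ N[x]]) + (N(x)))`. -/
lemma indIdeal_eq_sup {x : Fin n} (hx : x ∈ W) : indIdeal K G W ∅ = indIdeal K G (W.erase x) ∅ ⊔
    Ideal.span {X x} * indIdeal K G (awayFrom G W x) (nbrs G W x) := by
  have hm : ∀ p ∈ indIdeal K G (awayFrom G W x) (nbrs G W x), (X x * p : PolyRing n K) ∈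
      indIdeal K G (W.erase x) ∅ ⊔
        Ideal.span {X x} * indIdeal K G (awayFrom G W x) (nbrs G W x) := fun p hp =>
    Ideal.mem_sup_right (Ideal.mul_mem_mul (Ideal.mem_span_singleton_self _) hp)
  refine le_antisymm (indIdeal_le (fun i hi j hj h => ?_)
    (fun v hv => absurd hv (Finset.notMem_empty v))) (sup_le (indIdeal_le
      (fun i hi j hj h => ?_) (fun v hv => absurd hv (Finset.notMem_empty v))) ?_)
  · by_cases hix : i = x
    · subst hix
      exact hm _ (var_mem_indIdeal (mem_nbrs.2 ⟨hj, h⟩))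
    by_cases hjx : j = x
    · subst hjx
      rw [mul_comm (X i)]
      exact hm _ (var_mem_indIdeal (mem_nbrs.2 ⟨hi, h.symm⟩))
    exact Ideal.mem_sup_left (edge_mem_indIdeal (Finset.mem_erase.2 ⟨hix, hi⟩)
      (Finset.mem_erase.2 ⟨hjx, hj⟩) h)
  · exact edge_mem_indIdeal (Finset.mem_of_mem_erase hi) (Finset.mem_of_mem_erase hj) h
  · rw [Ideal.span_singleton_mul_le_iff]
    intro p hp
    have : indIdeal K G (awayFrom G W x) (nbrs G W x) ≤
        Submodule.comap (LinearMap.mulLeft (PolyRing n K) (X x)) (indIdeal K G W ∅) := by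
      refine indIdeal_le (fun i hi j hj h => ?_) (fun v hv => ?_)
      · exact Ideal.mul_mem_left (indIdeal K G W ∅) (X x)
          (edge_mem_indIdeal (mem_awayFrom.1 hi).1 (mem_awayFrom.1 hj).1 h)
      · exact edge_mem_indIdeal hx (mem_nbrs.1 hv).1 (mem_nbrs.1 hv).2
    exact this hp

/-! ### Claws and gap-freeness -/

/-- `G[W]` contains no induced `m`-claw, in terms of its centre `c` and its set of leaves `L`. -/
def NoClawOn (m : ℕ) (G : SimpleGraph (Fin n)) (W : Finset (Fin n)) : Prop :=
  ∀ c ∈ W, ∀ L ⊆ W, L.card = m → (∀ l ∈ L, G.Adj c l) →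
    ∃ l ∈ L, ∃ l' ∈ L, G.Adj l l'

lemma NoClawOn.mono {m : ℕ} {W' : Finset (Fin n)} (h : NoClawOn m G W) (hW : W' ⊆ W) :
    NoClawOn m G W' := fun c hc L hL => h c (hW hc) L (hL.trans hW)

/-- Removing from `G[W]` a vertex `x` of maximal degree together with its neighbours lowers by one
the bound on the size of claws. An `(m+1)`-claw with centre `c` avoiding `N[x]` would force
`N(x) ⊆ N(c)`: a neighbour `y` of `x` not adjacent to `c` would, by gap-freeness, be adjacent to all the leaves, and
then be the centre of an `(m+2)`-claw with the additional leaf `x`. As the leaves lie in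
`N(c) \ N(x)`, this contradicts maximality. -/
lemma NoClawOn.awayFrom {m : ℕ} (h : NoClawOn (m + 2) G W) (hgap : GapFree G) {x : Fin n}
    (hx : x ∈ W) (hmax : ∀ y ∈ W, (nbrs G W y).card ≤ (nbrs G W x).card) :
    NoClawOn (m + 1) G (awayFrom G W x) := by
  intro c hc L hL hcard hadj
  by_contra! hind
  have hsub : nbrs G W x ⊆ nbrs G W c := by
    intro y hy
    rw [mem_nbrs] at hy ⊢
    refine ⟨hy.1, ?_⟩
    by_contra hcy
    have hyl : ∀ l ∈ L, G.Adj y l := by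
      intro l hl
      by_contra hyl
      have hl' := mem_awayFrom.1 (hL hl)
      have hc' := mem_awayFrom.1 hc
      refine hgap ⟨x, y, c, l, hy.2, hadj l hl, hc'.2.1.symm, hl'.2.1.symm, ?_, ?_, hc'.2.2,
        hl'.2.2, fun h => hcy h.symm, hyl⟩
      · rintro rfl
        exact hc'.2.2 hy.2
      · rintro rfl
        exact hl'.2.2 hy.2
    have hxL : x ∉ L := fun hxL => (mem_awayFrom.1 (hL hxL)).2.1 rfl
    obtain ⟨l, hl, l', hl', hll⟩ := h y hy.1 (insert x L)
      (Finset.insert_subset hx fun l hl => (mem_awayFrom.1 (hL hl)).1)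
      (by rw [Finset.card_insert_of_notMem hxL, hcard]) (fun l hl => by
        rcases Finset.mem_insert.1 hl with rfl | hl
        · exact hy.2.symm
        · exact hyl l hl)
    rw [Finset.mem_insert] at hl hl'
    rcases hl with rfl | hl <;> rcases hl' with rfl | hl'
    · exact G.irrefl hll
    · exact (mem_awayFrom.1 (hL hl')).2.2 hll
    · exact (mem_awayFrom.1 (hL hl)).2.2 hll.symm
    · exact hind l hl l' hl' hll
  obtain ⟨l, hl⟩ : L.Nonempty := Finset.card_pos.1 (by omega)
  have hl' := mem_awayFrom.1 (hL hl)
  have hss : nbrs G W x ⊂ nbrs G W c := by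
    refine (Finset.ssubset_iff_of_subset hsub).2 ⟨l, mem_nbrs.2 ⟨hl'.1, hadj l hl⟩, fun h => ?_⟩
    exact hl'.2.2 (mem_nbrs.1 h).2
  exact absurd (Finset.card_lt_card hss) (not_lt.2 (hmax c (mem_awayFrom.1 hc).1))

/-! ### The regularity bound -/

/-- The regularity bound for all induced subgraphs, by induction on the number of vertices:
split off a vertex of maximal degree. With bound `1` there are no edges at all. -/
lemma regLE_indIdeal (hgap : GapFree G) (W : Finset (Fin n)) :
    ∀ m : ℕ, NoClawOn (m + 1) G W → RegLE (m + 1) (indIdeal K G W ∅) := by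
  induction W using Finset.strongInduction with
  | H W ih =>
    intro m h
    by_cases hE : ∃ i ∈ W, ∃ j ∈ W, G.Adj i j
    · obtain ⟨i, hi, j, hj, hij⟩ := hE
      obtain ⟨x, hx, hmax⟩ := Finset.exists_max_image W (fun y => (nbrs G W y).card) ⟨i, hi⟩
      cases m with
      | zero =>
        -- a `1`-claw is just an edge
        obtain ⟨l, hl, l', hl', hll⟩ := h i hi {j} (Finset.singleton_subset_iff.2 hj)
          (Finset.card_singleton j) (fun l hl => Finset.mem_singleton.1 hl ▸ hij)
        rw [Finset.mem_singleton.1 hl, Finset.mem_singleton.1 hl'] at hll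
        exact absurd hll G.irrefl
      | succ m =>
        rw [indIdeal_eq_sup hx]
        refine (ih _ (Finset.erase_ssubset hx) _ (h.mono (Finset.erase_subset _ _))).sup_X_mul
          (regLE_indIdeal_add_vars (ih _ ?_ m (h.awayFrom hgap hx hmax)) ?_)
          (indIdeal_erase_le x)
          (mem_indIdeal_of_X_mul (Finset.notMem_erase _ _) (Finset.notMem_empty x))
        · refine (Finset.ssubset_iff_of_subset fun y hy => (mem_awayFrom.1 hy).1).2
            ⟨x, hx, fun h => (mem_awayFrom.1 h).2.1 rfl⟩
        · exact Finset.disjoint_left.2 fun y hy hy' => (mem_awayFrom.1 hy).2.2 (mem_nbrs.1 hy').2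
    · have : indIdeal K G W ∅ = ⊥ := by
        rw [eq_bot_iff]
        exact indIdeal_le (fun i hi j hj hij => absurd ⟨i, hi, j, hj, hij⟩ hE)
          (fun v hv => absurd hv (Finset.notMem_empty v))
      rw [this]
      exact regLE_bot _

/-- A centre together with an enumeration of an independent set of its neighbours embeds `K_{1,m}`
as an induced subgraph. -/
lemma ClawFree.noClawOn {m : ℕ} (h : ClawFree m G) (W : Finset (Fin n)) : NoClawOn m G W := by
  intro c _ L _ hcard hadj
  by_contra! hind
  subst hcard
  let f : Fin 1 ⊕ Fin L.card → Fin n := Sum.elim (fun _ => c) (fun a => (L.equivFin.symm a : Fin n))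
  have hl : ∀ a, (L.equivFin.symm a : Fin n) ∈ L := fun a => (L.equivFin.symm a).2
  refine h.false ⟨⟨f, ?_⟩, ?_⟩
  · rintro (a | a) (b | b) hab
    · rw [Subsingleton.elim a b]
    · exact absurd (hadj _ (hl b)) (by
        have : c = L.equivFin.symm b := hab
        rw [← this]
        exact G.irrefl)
    · exact absurd (hadj _ (hl a)) (by
        have : (L.equivFin.symm a : Fin n) = c := hab
        rw [this]
        exact G.irrefl)
    · exact congrArg Sum.inr (L.equivFin.symm.injective (Subtype.ext hab))
  · rintro (a | a) (b | b)
    · change G.Adj c c ↔ _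
      simp
    · change G.Adj c (L.equivFin.symm b) ↔ _
      simpa using hadj _ (hl b)
    · change G.Adj (L.equivFin.symm a) c ↔ _
      simpa using (hadj _ (hl a)).symm
    · change G.Adj (L.equivFin.symm a) (L.equivFin.symm b) ↔ _
      simpa using hind _ (hl a) _ (hl b)

lemma edgeIdeal_eq_indIdeal : edgeIdeal K G = indIdeal K G Finset.univ ∅ := by
  rw [edgeIdeal, indIdeal]
  congr 1
  ext p
  simp

lemma RegLE.reg_le {r : ℕ} {I : Ideal (PolyRing n K)} (h : RegLE r I) : reg K I ≤ r := by
  by_cases hb : BddBelow { r : ℤ | ∃ F : GradedFreeRes K I,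
    ∀ i, ∀ a : Fin (F.rank i), (F.shift i a : ℤ) - (i : ℤ) ≤ r }
  · exact csInf_le hb h.exists_gradedFreeRes
  -- for `I = 0` every integer qualifies, and the infimum takes its junk value `0`
  · rw [reg, Int.csInf_of_not_bddBelow hb]
    exact Int.natCast_nonneg r

end Resolutions

/-- **Banerjee's bound.**  Let `m > 1`.  If `G` is gap-free and `m`-claw-free, then
`reg I(G) ≤ m`. -/
theorem regularity_le_of_gapFree_nClawFree {n : ℕ} (K : Type) [Field K]
    (G : SimpleGraph (Fin n)) (m : ℕ) (hm : 1 < m)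
    (hgap : GapFree G) (hclaw : ClawFree m G) :
    reg K (edgeIdeal K G) ≤ (m : ℤ) := by
  obtain ⟨m, rfl⟩ : ∃ k, m = k + 1 := ⟨m - 1, by omega⟩
  rw [edgeIdeal_eq_indIdeal]
  exact (regLE_indIdeal hgap _ m (hclaw.noClawOn _)).reg_le
end

section
/- Let G be a bipartite finite simple graph with at least one edge and let I = I(G) be its edge ideal. Then for all q ≥ 1, reg I^q ≤ 2q + co-chord(G) − 1. -/
/-!
Let `r` be the co-chordal number, and let `X` be one side of the bipartition. A bipartite graph
with chordal complement has linearly ordered neighbourhoods on the side `X` (`nested_of_chordal`),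
so `G` is a union of `r` bipartite relations with nested neighbourhoods. The bound follows from
`reg S/I^(q+1) ≤ 2q + r` (`qreg_pow`), proved by induction on `q`.

For the inductive step, the `q`-fold products of edges, which generate `I^q`, are added to `I^(q+1)`
one by one in decreasing lexicographic order. Each step uses the exact sequence
`0 → (S/(J : m))(-2q) → S/J → S/(J, m) → 0`, and the last ideal reached is `I^q`, for which
`reg S/I^q ≤ 2(q-1) + r` by induction. It remains to see that `reg S/(J : m) ≤ r`. Exchange
arguments along alternating walks in the bipartite graph (`Gen.exchange`, `Gen.extend`) show that
`J : m` is generated by variables and by quadrics `x_u x_v`, where `u ∈ X`, `v ∉ X`, and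
`x_v m = x_y m'` for a neighbour `y` of `u` and a `q`-fold product `m'` (`colon_eq`). The condition
depends on `u` only through its neighbours `y`, so these quadrics are again covered by `r` relations
with nested neighbourhoods, and repeatedly splitting off a vertex with the largest neighbourhood
bounds the regularity by `r` (`qreg_graphSet`).

Regularity bounds are handled through explicit resolutions. The predicate `Res` describes a finite
graded free resolution recursively by generators and syzygies, the behaviour of regularity in short
exact sequences (`SES.left`, `SES.middle`, `SES.right`) is derived from the horseshoe lemma, and
`Res.toGRes` assembles the resolution.
-/

open MvPolynomial

/-- A graph is chordal if every cycle of length at least 4 has a chord, i.e. an edge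
of the graph joining two vertices of the cycle which is not an edge of the cycle. -/
def Chordal {V : Type} (G : SimpleGraph V) : Prop :=
  ∀ (v : V) (w : G.Walk v v), w.IsCycle → 4 ≤ w.length →
    ∃ a b, a ∈ w.support ∧ b ∈ w.support ∧ G.Adj a b ∧ s(a, b) ∉ w.edges

/-- The co-chordal number `co-chord(G)`: the least number `r` of co-chordal subgraphs
`G_1, ..., G_r` of `G` (subgraphs whose complement is chordal) whose union is `G`,
i.e. `E(G) = E(G_1) ∪ ⋯ ∪ E(G_r)`. -/
noncomputable def cochordNum {n : ℕ} (G : SimpleGraph (Fin n)) : ℕ :=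
  sInf { r | ∃ f : Fin r → SimpleGraph (Fin n),
    (∀ i, f i ≤ G ∧ Chordal (f i)ᶜ) ∧ (⨆ i, f i) = G }

namespace BipReg

/-! ### Regularity in short exact sequences -/

/-- The polynomial ring `K[x_1, …, x_n]`. -/
abbrev S (n : ℕ) (K : Type) [Field K] := MvPolynomial (Fin n) K

/-- A family of subgroups `D k ≤ M` (`k : ℕ`) with `S_e • D k ⊆ D (k + e)`, playing the role of the
homogeneous components of a graded module. No direct sum decomposition is required: exactness in
each degree is carried along explicitly wherever it is needed. -/
structure Gr (n : ℕ) (K : Type) [Field K] (M : Type) [AddCommGroup M] [Module (S n K) M] where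
  D : ℕ → AddSubgroup M
  smul_mem : ∀ {e k : ℕ} {p : S n K} {m : M}, p.IsHomogeneous e → m ∈ D k → p • m ∈ D (k + e)

section machine

variable {n : ℕ} {K : Type} [Field K]

/-- The components `f ⁻¹ (D k)` pulled back along a linear map. -/
noncomputable def Gr.comap {M N : Type} [AddCommGroup M] [Module (S n K) M] [AddCommGroup N]
    [Module (S n K) N] (g : Gr n K N) (f : M →ₗ[S n K] N) : Gr n K M where
  D k := (g.D k).comap f.toAddMonoidHom
  smul_mem := by
    intro e k p m hp hm
    simpa using g.smul_mem hp hm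

@[simp] lemma Gr.mem_comap {M N : Type} [AddCommGroup M] [Module (S n K) M] [AddCommGroup N]
    [Module (S n K) N] (g : Gr n K N) (f : M →ₗ[S n K] N) (k : ℕ) (m : M) :
    m ∈ (g.comap f).D k ↔ f m ∈ g.D k := Iff.rfl

/-- The grading of the free module `⨁ S(-s a)`. An entry of a homogeneous vector of degree `k` is
zero or homogeneous of degree `k - s a`; the difference is written additively so that no truncated
subtraction occurs. -/
noncomputable def Gr.free {ι : Type} (s : ι → ℕ) : Gr n K (ι → S n K) where
  D k :=
    { carrier := {f | ∀ a, f a = 0 ∨ ∃ e, k = s a + e ∧ (f a).IsHomogeneous e}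
      zero_mem' := fun a => Or.inl rfl
      add_mem' := by
        intro f f' hf hf' a
        rcases hf a with h | ⟨e, he, h⟩
        · simpa [h] using hf' a
        · rcases hf' a with h' | ⟨e', he', h'⟩
          · simpa [h'] using Or.inr ⟨e, he, h⟩
          · obtain rfl : e = e' := by omega
            exact Or.inr ⟨e, he, h.add h'⟩
      neg_mem' := by
        intro f hf a
        rcases hf a with h | ⟨e, he, h⟩
        · exact Or.inl (by simp [h])
        · exact Or.inr ⟨e, he, by simpa using h.neg⟩ }
  smul_mem := by
    intro e k p f hp hf a
    rcases hf a with h | ⟨e', he', h⟩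
    · exact Or.inl (by simp [h])
    · exact Or.inr ⟨e + e', by omega, by simpa using hp.mul h⟩

lemma Gr.mem_free {ι : Type} {s : ι → ℕ} {k : ℕ} {f : ι → S n K} :
    f ∈ (Gr.free s).D k ↔ ∀ a, f a = 0 ∨ ∃ e, k = s a + e ∧ (f a).IsHomogeneous e := Iff.rfl

/-- The linear map `(ι → S) → M` sending the standard basis to the family `v`. -/
noncomputable abbrev lc {M ι : Type} [AddCommGroup M] [Module (S n K) M] [Fintype ι] (v : ι → M) :
    (ι → S n K) →ₗ[S n K] M := Fintype.linearCombination (S n K) v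

lemma lc_mem {M ι : Type} [AddCommGroup M] [Module (S n K) M] [Fintype ι] {g : Gr n K M}
    {s : ι → ℕ} {v : ι → M} (hv : ∀ a, v a ∈ g.D (s a)) {k : ℕ} {f : ι → S n K}
    (hf : f ∈ (Gr.free s).D k) : lc v f ∈ g.D k := by
  rw [Fintype.linearCombination_apply]
  refine sum_mem fun a _ => ?_
  rcases hf a with h | ⟨e, rfl, h⟩
  · simp [h]
  · exact g.smul_mem h (hv a)

lemma lc_sum {M α β : Type} [AddCommGroup M] [Module (S n K) M] [Fintype α] [Fintype β]
    (v : α → M) (w : β → M) (f : α ⊕ β → S n K) :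
    lc (Sum.elim v w) f = lc v (fun a => f (Sum.inl a)) + lc w (fun b => f (Sum.inr b)) := by
  simp [Fintype.linearCombination_apply]

lemma map_lc {M N α : Type} [AddCommGroup M] [Module (S n K) M] [AddCommGroup N]
    [Module (S n K) N] [Fintype α] (p : M →ₗ[S n K] N) (v : α → M) (f : α → S n K) :
    p (lc v f) = lc (fun a => p (v a)) f := by
  simp [Fintype.linearCombination_apply]

/-- `Res l M g r`: the graded module `M` has a graded free resolution of length at most `l` whose
`i`-th term is generated in degrees `≤ r + i`. Recursively, `M` is zero, or it has a finite
homogeneous generating family in degrees `≤ r`, surjective in each degree, whose syzygy module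
satisfies `Res` with `l` lowered and `r` raised by one. -/
def Res : ℕ → ∀ (M : Type) [AddCommGroup M] [Module (S n K) M], Gr n K M → ℕ → Prop
  | 0, M, _, _, _, _ => Subsingleton M
  | l + 1, M, _, _, g, r => ∃ (ι : Type) (_ : Fintype ι) (s : ι → ℕ) (v : ι → M),
      (∀ a, v a ∈ g.D (s a)) ∧ (∀ a, s a ≤ r) ∧ Function.Surjective (lc (n := n) (K := K) v) ∧
      (∀ k m, m ∈ g.D k → ∃ f ∈ (Gr.free (n := n) (K := K) s).D k, lc v f = m) ∧
      Res l (LinearMap.ker (lc (n := n) (K := K) v))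
        ((Gr.free s).comap (LinearMap.ker (lc v)).subtype) (r + 1)

lemma Res.mono {l : ℕ} : ∀ {l' : ℕ} {M : Type} [AddCommGroup M] [Module (S n K) M]
    {g : Gr n K M} {r r' : ℕ}, Res l M g r → l ≤ l' → r ≤ r' → Res l' M g r' := by
  induction l with
  | zero =>
    intro l'
    induction l' with
    | zero => intro M _ _ g r r' h _ _; exact h
    | succ l' ih =>
      intro M _ _ g r r' h _ _
      have h : Subsingleton M := h
      refine ⟨Empty, inferInstance, Empty.elim, Empty.elim, fun a => a.elim, fun a => a.elim,
        fun m => ⟨0, Subsingleton.elim _ _⟩, fun k m _ => ⟨0, zero_mem _, Subsingleton.elim _ _⟩,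
        ih (r := 0) ?_ (Nat.zero_le _) (Nat.zero_le _)⟩
      show Subsingleton _
      infer_instance
  | succ l ih =>
    intro l' M _ _ g r r' h hl hr
    obtain ⟨l', rfl⟩ : ∃ k, l' = k + 1 := ⟨l' - 1, by omega⟩
    obtain ⟨ι, _, s, v, h1, h2, h3, h4, h5⟩ := h
    exact ⟨ι, _, s, v, h1, fun a => (h2 a).trans hr, h3, h4, ih h5 (by omega) (by omega)⟩

/-- An isomorphism raising degrees by `d` raises the regularity bound by `d`. Since degrees are
natural numbers, vanishing of the target components below degree `d` is a separate hypothesis. -/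
lemma Res.equiv {l : ℕ} : ∀ {M N : Type} [AddCommGroup M] [Module (S n K) M] [AddCommGroup N]
    [Module (S n K) N] {g : Gr n K M} {g' : Gr n K N} {r : ℕ} (φ : M ≃ₗ[S n K] N) (d : ℕ)
    (_ : ∀ k m, m ∈ g.D k ↔ φ m ∈ g'.D (k + d)) (_ : ∀ k m, k < d → φ m ∈ g'.D k → m = 0),
    Res l M g r → Res l N g' (r + d) := by
  induction l with
  | zero =>
    intro M N _ _ _ _ g g' r φ d _ _ h
    have h : Subsingleton M := h
    exact φ.symm.injective.subsingleton
  | succ l ih =>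
    intro M N _ _ _ _ g g' r φ d H1 H2 h
    obtain ⟨ι, _, s, v, h1, h2, h3, h4, h5⟩ := h
    have key : ∀ f : ι → S n K, lc (fun a => φ (v a)) f = φ (lc v f) := fun f =>
      (map_lc φ.toLinearMap v f).symm
    have hker : LinearMap.ker (lc (n := n) (K := K) v) =
        LinearMap.ker (lc (n := n) (K := K) fun a => φ (v a)) := by
      ext f
      rw [LinearMap.mem_ker, LinearMap.mem_ker, key]
      simp
    have hfree : ∀ k (f : ι → S n K), f ∈ (Gr.free s).D k ↔
        f ∈ (Gr.free (fun a => s a + d)).D (k + d) := by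
      intro k f
      simp only [Gr.mem_free]
      refine forall_congr' fun a => or_congr Iff.rfl (exists_congr fun e => and_congr ?_ Iff.rfl)
      omega
    refine ⟨ι, inferInstance, fun a => s a + d, fun a => φ (v a), fun a => (H1 _ _).1 (h1 a),
      fun a => by simpa using h2 a, ?_, ?_, ?_⟩
    · intro m
      obtain ⟨f, hf⟩ := h3 (φ.symm m)
      exact ⟨f, by rw [key, hf]; simp⟩
    · intro k m hm
      by_cases hk : k < d
      · have := H2 k (φ.symm m) hk (by simpa using hm)
        exact ⟨0, zero_mem _, by rw [map_zero, (φ.symm.map_eq_zero_iff).1 this]⟩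
      · obtain ⟨k, rfl⟩ : ∃ j, k = j + d := ⟨k - d, by omega⟩
        obtain ⟨f, hf, hfm⟩ := h4 k (φ.symm m) ((H1 _ _).2 (by simpa using hm))
        exact ⟨f, (hfree k f).1 hf, by rw [key, hfm]; simp⟩
    · have := ih (g' := (Gr.free (fun a => s a + d)).comap
        (LinearMap.ker (lc (n := n) (K := K) fun a => φ (v a))).subtype)
        (LinearEquiv.ofEq _ _ hker) d ?_ ?_ h5
      · convert this using 1
        omega
      · intro k f
        exact hfree k f.1
      · intro k f hk hf
        ext1
        funext a
        rcases hf a with h | ⟨e, he, h⟩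
        · exact h
        · have he : k = s a + d + e := he
          omega

/-- A short exact sequence of graded modules, exact also degree by degree. -/
structure SES {A B C : Type} [AddCommGroup A] [Module (S n K) A] [AddCommGroup B]
    [Module (S n K) B] [AddCommGroup C] [Module (S n K) C]
    (gA : Gr n K A) (gB : Gr n K B) (gC : Gr n K C) where
  i : A →ₗ[S n K] B
  p : B →ₗ[S n K] C
  inj : Function.Injective i
  surj : Function.Surjective p
  zero : ∀ a, p (i a) = 0
  exact : ∀ b, p b = 0 → ∃ a, i a = b
  memA : ∀ k a, a ∈ gA.D k ↔ i a ∈ gB.D k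
  memB : ∀ k b, b ∈ gB.D k → p b ∈ gC.D k
  lift : ∀ k c, c ∈ gC.D k → ∃ b ∈ gB.D k, p b = c

/-- The horseshoe lemma: generators of `A` and lifts of generators of `C` generate `B`, and the
syzygy modules again form a short exact sequence. -/
lemma Res.horseshoe {l : ℕ} : ∀ {A B C : Type} [AddCommGroup A] [Module (S n K) A]
    [AddCommGroup B] [Module (S n K) B] [AddCommGroup C] [Module (S n K) C]
    {gA : Gr n K A} {gB : Gr n K B} {gC : Gr n K C} {r : ℕ} (_ : SES gA gB gC),
    Res l A gA r → Res l C gC r → Res l B gB r := by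
  induction l with
  | zero =>
    intro A B C _ _ _ _ _ _ gA gB gC r E hA hC
    have hA : Subsingleton A := hA
    have hC : Subsingleton C := hC
    show Subsingleton B
    refine subsingleton_of_forall_eq 0 fun b => ?_
    obtain ⟨a, rfl⟩ := E.exact b (Subsingleton.elim _ _)
    rw [Subsingleton.elim a 0, map_zero]
  | succ l ih =>
    intro A B C _ _ _ _ _ _ gA gB gC r E hA hC
    obtain ⟨α, _, sA, vA, a1, a2, a3, a4, a5⟩ := hA
    obtain ⟨γ, _, sC, vC, c1, c2, c3, c4, c5⟩ := hC
    choose w hw hpw using fun c => E.lift _ _ (c1 c)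
    have key : ∀ f : α ⊕ γ → S n K, lc (Sum.elim (fun a => E.i (vA a)) w) f =
        E.i (lc vA (fun a => f (Sum.inl a))) + lc w (fun b => f (Sum.inr b)) := by
      intro f
      rw [lc_sum, map_lc]
    have hp : ∀ h : γ → S n K, E.p (lc w h) = lc vC h := by
      intro h
      rw [map_lc]
      simp only [hpw]
    have hv : ∀ a, Sum.elim (fun a => E.i (vA a)) w a ∈ gB.D (Sum.elim sA sC a) := by
      rintro (a | c)
      · exact (E.memA _ _).1 (a1 a)
      · exact hw c
    have hpk : ∀ f : α ⊕ γ → S n K, E.p (lc (Sum.elim (fun a => E.i (vA a)) w) f) =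
        lc vC (fun b => f (Sum.inr b)) := by
      intro f
      rw [key, map_add, E.zero, zero_add, hp]
    refine ⟨α ⊕ γ, inferInstance, Sum.elim sA sC, Sum.elim (fun a => E.i (vA a)) w, hv, ?_, ?_,
      ?_, ?_⟩
    · rintro (a | c)
      · exact a2 a
      · exact c2 c
    · intro b
      obtain ⟨h, hh⟩ := c3 (E.p b)
      obtain ⟨a, ha⟩ := E.exact (b - lc w h) (by rw [map_sub, hp, hh, sub_self])
      obtain ⟨f, hf⟩ := a3 a
      exact ⟨Sum.elim f h, by rw [key]; simp only [Sum.elim_inl, Sum.elim_inr]; rw [hf, ha]; abel⟩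
    · intro k b hb
      obtain ⟨h, hhm, hh⟩ := c4 k (E.p b) (E.memB _ _ hb)
      obtain ⟨a, ha⟩ := E.exact (b - lc w h) (by rw [map_sub, hp, hh, sub_self])
      have hak : a ∈ gA.D k := by
        rw [E.memA, ha]
        exact sub_mem hb (lc_mem hw hhm)
      obtain ⟨f, hfm, hf⟩ := a4 k a hak
      refine ⟨Sum.elim f h, ?_, by
        rw [key]; simp only [Sum.elim_inl, Sum.elim_inr]; rw [hf, ha]; abel⟩
      rintro (a | c)
      · exact hfm a
      · exact hhm c
    · refine ih (gA := (Gr.free sA).comap (LinearMap.ker (lc (n := n) (K := K) vA)).subtype)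
        (gC := (Gr.free sC).comap (LinearMap.ker (lc (n := n) (K := K) vC)).subtype) ?_ a5 c5
      refine
        { i := LinearMap.codRestrict _ ((LinearMap.pi fun x : α ⊕ γ =>
              Sum.elim (fun a => LinearMap.proj a) (fun _ => 0) x).comp
              (LinearMap.ker (lc (n := n) (K := K) vA)).subtype) ?_
          p := LinearMap.codRestrict _ ((LinearMap.funLeft (S n K) (S n K) Sum.inr).comp
              (LinearMap.ker (lc (n := n) (K := K) (Sum.elim (fun a => E.i (vA a)) w))).subtype) ?_
          inj := ?_, surj := ?_, zero := ?_, exact := ?_, memA := ?_, memB := ?_, lift := ?_ }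
      · rintro ⟨f, hf⟩
        rw [LinearMap.mem_ker] at hf ⊢
        rw [key]
        convert congrArg E.i hf using 1
        · have : lc w (fun b => ((LinearMap.pi fun x : α ⊕ γ =>
              Sum.elim (fun a => LinearMap.proj (R := S n K) a) (fun _ => 0) x) f) (Sum.inr b))
              = 0 := by
            convert map_zero (lc (n := n) (K := K) w)
            rfl
          erw [this]
          rw [add_zero]; rfl
        · simp
      · rintro ⟨f, hf⟩
        rw [LinearMap.mem_ker] at hf ⊢
        have := hpk f
        rw [hf, map_zero] at this
        exact this.symm
      · rintro ⟨f, hf⟩ ⟨f', hf'⟩ h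
        ext1
        funext a
        exact congrFun (congrArg Subtype.val h) (Sum.inl a)
      · rintro ⟨h, hh⟩
        rw [LinearMap.mem_ker] at hh
        obtain ⟨a, ha⟩ := E.exact (- lc w h) (by rw [map_neg, hp, hh, neg_zero])
        obtain ⟨f, hf⟩ := a3 a
        refine ⟨⟨Sum.elim f h, ?_⟩, ?_⟩
        · rw [LinearMap.mem_ker, key]; simp only [Sum.elim_inl, Sum.elim_inr]; rw [hf, ha]; abel
        · ext1; rfl
      · rintro ⟨f, hf⟩
        ext1; rfl
      · rintro ⟨f, hf⟩ h
        rw [LinearMap.mem_ker] at hf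
        have h0 : (fun b => f (Sum.inr b)) = 0 := congrArg Subtype.val h
        rw [key, h0, map_zero, add_zero] at hf
        refine ⟨⟨fun a => f (Sum.inl a), E.inj (by rw [hf, map_zero])⟩, ?_⟩
        ext1
        funext x
        rcases x with a | c
        · rfl
        · exact (congrFun h0 c).symm
      · rintro k ⟨f, hf⟩
        constructor
        · rintro h (a | c)
          · exact h a
          · exact Or.inl rfl
        · intro h a
          exact h (Sum.inl a)
      · rintro k ⟨f, hf⟩ h c
        exact h (Sum.inr c)
      · rintro k ⟨h, hh⟩ hk
        rw [LinearMap.mem_ker] at hh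
        obtain ⟨a, ha⟩ := E.exact (- lc w h) (by rw [map_neg, hp, hh, neg_zero])
        have hak : a ∈ gA.D k := by
          rw [E.memA, ha]
          exact neg_mem (lc_mem hw hk)
        obtain ⟨f, hfk, hf⟩ := a4 k a hak
        refine ⟨⟨Sum.elim f h, ?_⟩, ?_, ?_⟩
        · rw [LinearMap.mem_ker, key]; simp only [Sum.elim_inl, Sum.elim_inr]; rw [hf, ha]; abel
        · rintro (a | c)
          · exact hfk a
          · exact hk c
        · ext1; rfl

/-- `M` has a finite graded free resolution whose `i`-th term is generated in degrees `≤ r + i`. -/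
def HasReg (M : Type) [AddCommGroup M] [Module (S n K) M] (g : Gr n K M) (r : ℕ) : Prop :=
  ∃ l, Res l M g r

lemma HasReg.mono {M : Type} [AddCommGroup M] [Module (S n K) M] {g : Gr n K M} {r r' : ℕ}
    (h : HasReg M g r) (hr : r ≤ r') : HasReg M g r' :=
  h.imp fun _ h => h.mono le_rfl hr

lemma HasReg.equiv {M N : Type} [AddCommGroup M] [Module (S n K) M] [AddCommGroup N]
    [Module (S n K) N] {g : Gr n K M} {g' : Gr n K N} {r : ℕ} (h : HasReg M g r)
    (φ : M ≃ₗ[S n K] N) (d : ℕ) (h1 : ∀ k m, m ∈ g.D k ↔ φ m ∈ g'.D (k + d))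
    (h2 : ∀ k m, k < d → φ m ∈ g'.D k → m = 0) : HasReg N g' (r + d) :=
  h.imp fun _ h => h.equiv φ d h1 h2

lemma HasReg.of_subsingleton {M : Type} [AddCommGroup M] [Module (S n K) M] [h : Subsingleton M]
    (g : Gr n K M) (r : ℕ) : HasReg M g r := ⟨0, h⟩

section

variable {A B C : Type} [AddCommGroup A] [Module (S n K) A] [AddCommGroup B] [Module (S n K) B]
  [AddCommGroup C] [Module (S n K) C] {gA : Gr n K A} {gB : Gr n K B} {gC : Gr n K C} {r : ℕ}

/-- In `0 → A → B → C → 0`, `reg B ≤ max (reg A, reg C)`. -/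
lemma SES.middle (E : SES gA gB gC) (hA : HasReg A gA r) (hC : HasReg C gC r) :
    HasReg B gB r := by
  obtain ⟨l, hA⟩ := hA
  obtain ⟨l', hC⟩ := hC
  exact ⟨max l l', Res.horseshoe E (hA.mono (le_max_left _ _) le_rfl)
    (hC.mono (le_max_right _ _) le_rfl)⟩

/-- A map whose values lie in the image of an injective map `i` factors through `i`. -/
lemma exists_factor {M : Type} [AddCommGroup M] [Module (S n K) M] {i : A →ₗ[S n K] B}
    (hi : Function.Injective i) (h : M →ₗ[S n K] B) (hh : ∀ m, ∃ a, i a = h m) :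
    ∃ q : M →ₗ[S n K] A, ∀ m, i (q m) = h m := by
  refine ⟨(LinearEquiv.ofInjective i hi).symm.toLinearMap.comp
    (h.codRestrict (LinearMap.range i) fun m => hh m), fun m => ?_⟩
  have := LinearEquiv.ofInjective_symm_apply (f := i) (h := hi)
    ((h.codRestrict (LinearMap.range i) fun m => hh m) m)
  exact this

/-- In `0 → A → B → C → 0`, `reg C ≤ max (reg A - 1, reg B)`. The generators of `B` also generate
`C`, and the new syzygy module is an extension of `A` by the old one. -/
lemma SES.right (E : SES gA gB gC) (hA : HasReg A gA (r + 1)) (hB : HasReg B gB r) :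
    HasReg C gC r := by
  obtain ⟨l, hB⟩ := hB
  obtain ⟨ι, _, s, v, b1, b2, b3, b4, b5⟩ := hB.mono (Nat.le_succ l) le_rfl
  have key : ∀ f : ι → S n K, lc (fun a => E.p (v a)) f = E.p (lc v f) := fun f =>
    (map_lc E.p v f).symm
  obtain ⟨q, hq⟩ := exists_factor E.inj ((lc (n := n) (K := K) v).comp
    (LinearMap.ker (lc (n := n) (K := K) fun a => E.p (v a))).subtype) (by
      rintro ⟨f, hf⟩
      rw [LinearMap.mem_ker, key] at hf
      exact E.exact _ hf)
  replace hq : ∀ f (hf : f ∈ LinearMap.ker (lc (n := n) (K := K) fun a => E.p (v a))),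
    E.i (q ⟨f, hf⟩) = lc v f := fun f hf => hq ⟨f, hf⟩
  have hle : LinearMap.ker (lc (n := n) (K := K) v) ≤
      LinearMap.ker (lc (n := n) (K := K) fun a => E.p (v a)) := by
    intro f hf
    rw [LinearMap.mem_ker] at hf ⊢
    rw [key, hf, map_zero]
  have E' : SES ((Gr.free s).comap (LinearMap.ker (lc (n := n) (K := K) v)).subtype)
      ((Gr.free s).comap (LinearMap.ker (lc (n := n) (K := K) fun a => E.p (v a))).subtype) gA :=
    { i := Submodule.inclusion hle
      p := q
      inj := Submodule.inclusion_injective hle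
      surj := fun a => by
        obtain ⟨f, hf⟩ := b3 (E.i a)
        have hfk : f ∈ LinearMap.ker (lc (n := n) (K := K) fun a => E.p (v a)) := by
          rw [LinearMap.mem_ker, key, hf, E.zero]
        exact ⟨⟨f, hfk⟩, E.inj (by rw [hq, hf])⟩
      zero := by
        rintro ⟨f, hf⟩
        refine E.inj ?_
        rw [LinearMap.mem_ker] at hf
        exact (hq f _).trans (by rw [hf, map_zero])
      exact := by
        rintro ⟨f, hf⟩ h0
        refine ⟨⟨f, ?_⟩, rfl⟩
        rw [LinearMap.mem_ker, ← hq f hf, h0, map_zero]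
      memA := fun k f => Iff.rfl
      memB := by
        rintro k ⟨f, hf⟩ h
        rw [E.memA, hq]
        exact lc_mem b1 h
      lift := by
        intro k a ha
        obtain ⟨f, hfk, hf⟩ := b4 k (E.i a) ((E.memA _ _).1 ha)
        have hfk' : f ∈ LinearMap.ker (lc (n := n) (K := K) fun a => E.p (v a)) := by
          rw [LinearMap.mem_ker, key, hf, E.zero]
        exact ⟨⟨f, hfk'⟩, hfk, E.inj (by rw [hq, hf])⟩ }
  obtain ⟨m, hm⟩ := E'.middle ⟨l, b5⟩ hA
  refine ⟨m + 1, ι, inferInstance, s, fun a => E.p (v a), fun a => E.memB _ _ (b1 a), b2, ?_, ?_,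
    hm⟩
  · intro c
    obtain ⟨b, rfl⟩ := E.surj c
    obtain ⟨f, rfl⟩ := b3 b
    exact ⟨f, key f⟩
  · intro k c hc
    obtain ⟨b, hb, rfl⟩ := E.lift k c hc
    obtain ⟨f, hf, rfl⟩ := b4 k b hb
    exact ⟨f, hf, key f⟩

lemma HasReg.free {ι : Type} [Fintype ι] {s : ι → ℕ} (hs : ∀ a, s a ≤ r) :
    HasReg (n := n) (K := K) (ι → S n K) (Gr.free s) r := by
  classical
  have key : ∀ f : ι → S n K, lc (fun a => Pi.single a 1) f = f := by
    intro f
    rw [Fintype.linearCombination_apply]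
    simp_rw [← Pi.single_smul]
    simpa using Finset.univ_sum_single f
  refine ⟨1, ι, inferInstance, s, fun a => Pi.single a 1, ?_, hs, fun f => ⟨f, key f⟩,
    fun k f hf => ⟨f, hf, key f⟩, ?_⟩
  · intro a b
    by_cases h : b = a
    · subst h
      exact Or.inr ⟨0, rfl, by simpa using isHomogeneous_one _ _⟩
    · exact Or.inl (by simp [h])
  · refine subsingleton_of_forall_eq 0 ?_
    rintro ⟨f, hf⟩
    ext1
    rw [LinearMap.mem_ker, key] at hf
    exact hf

/-- The grading of a direct sum of two graded modules. -/
def Gr.prod (gA : Gr n K A) (gB : Gr n K B) : Gr n K (A × B) where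
  D k := (gA.D k).prod (gB.D k)
  smul_mem hp hm := ⟨gA.smul_mem hp hm.1, gB.smul_mem hp hm.2⟩

/-- In `0 → A → B → C → 0`, `reg A ≤ max (reg B, reg C + 1)`. For a free cover `F → C` with kernel
`Z`, the module `A × F` is an extension of `B` by `Z`, and `A` is the quotient of `A × F` by `F`. -/
lemma SES.left (E : SES gA gB gC) (hB : HasReg B gB (r + 1)) (hC : HasReg C gC r) :
    HasReg A gA (r + 1) := by
  obtain ⟨l, hC⟩ := hC
  obtain ⟨ι, _, s, v, c1, c2, c3, c4, c5⟩ := hC.mono (Nat.le_succ l) le_rfl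
  choose w hw hpw using fun c => E.lift _ _ (c1 c)
  have hp : ∀ h : ι → S n K, E.p (lc w h) = lc v h := by
    intro h
    rw [map_lc]
    simp only [hpw]
  obtain ⟨q, hq⟩ := exists_factor E.inj ((lc (n := n) (K := K) w).comp
    (LinearMap.ker (lc (n := n) (K := K) v)).subtype) (by
      rintro ⟨f, hf⟩
      rw [LinearMap.mem_ker] at hf
      exact E.exact _ ((hp f).trans hf))
  replace hq : ∀ f (hf : f ∈ LinearMap.ker (lc (n := n) (K := K) v)),
    E.i (q ⟨f, hf⟩) = lc w f := fun f hf => hq ⟨f, hf⟩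
  have E1 : SES ((Gr.free s).comap (LinearMap.ker (lc (n := n) (K := K) v)).subtype)
      (gA.prod (Gr.free s)) gB :=
    { i := (-q).prod (Submodule.subtype _)
      p := E.i.coprod (lc w)
      inj := by
        rintro f f' h
        exact Subtype.ext (congrArg Prod.snd h)
      surj := by
        intro b
        obtain ⟨f, hf⟩ := c3 (E.p b)
        obtain ⟨a, ha⟩ := E.exact (b - lc w f) (by rw [map_sub, hp, hf, sub_self])
        exact ⟨(a, f), by rw [LinearMap.coprod_apply]; simp only; rw [ha]; abel⟩
      zero := by
        rintro ⟨f, hf⟩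
        simp [hq f hf]
      exact := by
        rintro ⟨a, f⟩ h
        rw [LinearMap.coprod_apply] at h
        simp only at h
        have hf : f ∈ LinearMap.ker (lc (n := n) (K := K) v) := by
          have := congrArg E.p h
          rw [map_add, E.zero, zero_add, hp, map_zero] at this
          exact this
        refine ⟨⟨f, hf⟩, Prod.ext (E.inj ?_) rfl⟩
        have h3 : E.i (-q ⟨f, hf⟩) = E.i a := by
          rw [map_neg, hq]
          exact (eq_neg_of_add_eq_zero_left h).symm
        exact h3
      memA := by
        rintro k ⟨f, hf⟩
        refine ⟨fun h => ⟨?_, h⟩, fun h => h.2⟩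
        have : -q ⟨f, hf⟩ ∈ gA.D k := by
          refine neg_mem ?_
          rw [E.memA, hq]
          exact lc_mem hw h
        exact this
      memB := by
        rintro k ⟨a, f⟩ h
        rw [LinearMap.coprod_apply]
        exact add_mem ((E.memA _ _).1 h.1) (lc_mem hw h.2)
      lift := by
        intro k b hb
        obtain ⟨f, hfk, hf⟩ := c4 k (E.p b) (E.memB _ _ hb)
        obtain ⟨a, ha⟩ := E.exact (b - lc w f) (by rw [map_sub, hp, hf, sub_self])
        refine ⟨(a, f), ⟨?_, hfk⟩, by rw [LinearMap.coprod_apply]; simp only; rw [ha]; abel⟩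
        show a ∈ gA.D k
        rw [E.memA, ha]
        exact sub_mem hb (lc_mem hw hfk) }
  have E2 : SES (Gr.free s) (gA.prod (Gr.free s)) gA :=
    { i := LinearMap.inr _ _ _
      p := LinearMap.fst _ _ _
      inj := LinearMap.inr_injective
      surj := LinearMap.fst_surjective
      zero := fun _ => rfl
      exact := by
        rintro ⟨a, f⟩ (h : a = 0)
        exact ⟨f, by simp [h]⟩
      memA := fun k f => ⟨fun h => ⟨zero_mem _, h⟩, fun h => h.2⟩
      memB := fun k b h => h.1
      lift := fun k a ha => ⟨(a, 0), ⟨ha, zero_mem _⟩, rfl⟩ }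
  exact E2.right (HasReg.free fun a => (c2 a).trans (by omega)) (E1.middle ⟨l, c5⟩ hB)

end

/-- A finite graded free resolution of a graded module `M` whose `i`-th term is generated in degrees
`≤ r + i`, in the matrix form used by `GradedFreeRes`. -/
structure GRes (M : Type) [AddCommGroup M] [Module (S n K) M] (g : Gr n K M) (r : ℕ) where
  len : ℕ
  rank : ℕ → ℕ
  rank_zero : ∀ i, len < i → rank i = 0
  shift : (i : ℕ) → Fin (rank i) → ℕ
  d : (i : ℕ) → ((Fin (rank (i + 1)) → S n K) →ₗ[S n K] (Fin (rank i) → S n K))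
  aug : (Fin (rank 0) → S n K) →ₗ[S n K] M
  surj : LinearMap.range aug = ⊤
  exact_zero : LinearMap.ker aug = LinearMap.range (d 0)
  exact_succ : ∀ i, LinearMap.ker (d i) = LinearMap.range (d (i + 1))
  homog_aug : ∀ a, aug (Pi.single a 1) ∈ g.D (shift 0 a)
  homog_d : ∀ i b, d i (Pi.single b 1) ∈ (Gr.free (shift i)).D (shift (i + 1) b)
  bound : ∀ i a, shift i a ≤ r + i

lemma Res.toGRes {l : ℕ} : ∀ {M : Type} [AddCommGroup M] [Module (S n K) M] {g : Gr n K M}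
    {r : ℕ}, Res l M g r → Nonempty (GRes M g r) := by
  induction l with
  | zero =>
    intro M _ _ g r h
    have h : Subsingleton M := h
    exact ⟨{
      len := 0
      rank := fun _ => 0
      rank_zero := fun _ _ => rfl
      shift := fun _ a => a.elim0
      d := fun _ => 0
      aug := 0
      surj := Subsingleton.elim _ _
      exact_zero := Subsingleton.elim _ _
      exact_succ := fun _ => Subsingleton.elim _ _
      homog_aug := fun a => a.elim0
      homog_d := fun _ a => a.elim0
      bound := fun _ a => a.elim0 }⟩
  | succ l ih =>
    intro M _ _ g r h
    obtain ⟨ι, _, s, v, h1, h2, h3, -, h5⟩ := h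
    obtain ⟨R⟩ := ih h5
    let e : ι ≃ Fin (Fintype.card ι) := Fintype.equivFin ι
    let E : (Fin (Fintype.card ι) → S n K) ≃ₗ[S n K] (ι → S n K) :=
      LinearEquiv.funCongrLeft (S n K) (S n K) e
    have hE : ∀ f a, E f a = f (e a) := fun f a => rfl
    have hEs : ∀ f a, E.symm f a = f (e.symm a) := fun f a => rfl
    let d0 : (Fin (R.rank 0) → S n K) →ₗ[S n K] (Fin (Fintype.card ι) → S n K) :=
      E.symm.toLinearMap.comp ((Submodule.subtype _).comp R.aug)
    have hd0 : ∀ f, d0 f = E.symm (R.aug f : ι → S n K) := fun f => rfl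
    exact ⟨{
      len := R.len + 1
      rank := fun | 0 => Fintype.card ι | i + 1 => R.rank i
      rank_zero := fun
        | 0, h => by omega
        | i + 1, h => R.rank_zero i (by omega)
      shift := fun | 0 => fun a => s (e.symm a) | i + 1 => R.shift i
      d := fun | 0 => d0 | i + 1 => R.d i
      aug := (lc v).comp E.toLinearMap
      surj := by
        rw [LinearMap.range_eq_top]
        exact h3.comp E.surjective
      exact_zero := by
        ext f
        constructor
        · intro hf
          have hf' : E f ∈ LinearMap.ker (lc (n := n) (K := K) v) := hf
          have : (⟨E f, hf'⟩ : LinearMap.ker (lc (n := n) (K := K) v)) ∈ LinearMap.range R.aug := by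
            rw [R.surj]; trivial
          obtain ⟨x, hx⟩ := this
          refine ⟨x, ?_⟩
          show d0 x = f
          rw [hd0, hx]
          exact E.symm_apply_apply f
        · rintro ⟨x, rfl⟩
          show lc v (E (d0 x)) = 0
          rw [hd0, E.apply_symm_apply]
          exact (R.aug x).2
      exact_succ := fun
        | 0 => by
          rw [← R.exact_zero]
          ext f
          rw [LinearMap.mem_ker, LinearMap.mem_ker]
          show d0 f = 0 ↔ _
          rw [hd0, E.symm.map_eq_zero_iff]
          exact Submodule.coe_eq_zero
        | i + 1 => R.exact_succ i
      homog_aug := by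
        intro a
        show lc v (E (Pi.single a 1)) ∈ _
        refine lc_mem h1 ?_
        intro b
        rw [hE]
        by_cases h : e b = a
        · subst h
          exact Or.inr ⟨0, by simp, by simpa using isHomogeneous_one _ _⟩
        · exact Or.inl (by simp [h])
      homog_d := fun
        | 0 => by
          intro b a
          exact R.homog_aug b (e.symm a)
        | i + 1 => R.homog_d i
      bound := fun
        | 0 => fun a => h2 _
        | i + 1 => fun a => (R.bound i a).trans (by omega) }⟩

end machine

/-! ### Quotients by monomial ideals -/

section monomials

variable {n : ℕ} {K : Type} [Field K]

/-- The standard grading of the polynomial ring. -/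
noncomputable def polyGr : Gr n K (S n K) where
  D k := (homogeneousSubmodule (Fin n) K k).toAddSubgroup
  smul_mem := by
    intro e k p m hp hm
    have hm : m.IsHomogeneous k := hm
    have := hm.mul hp
    rw [mul_comm] at this
    exact this

lemma mem_polyGr {k : ℕ} {p : S n K} :
    p ∈ (polyGr (n := n) (K := K)).D k ↔ p.IsHomogeneous k := Iff.rfl

variable (K) in
/-- The monomial ideal generated by the monomials with exponent in `T`. -/
noncomputable def monIdeal (T : Set (Fin n →₀ ℕ)) : Submodule (S n K) (S n K) :=
  Ideal.span ((fun e => monomial e (1 : K)) '' T)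

lemma mem_monIdeal {T : Set (Fin n →₀ ℕ)} (hT : IsUpperSet T) {p : S n K} :
    p ∈ monIdeal K T ↔ ∀ e, coeff e p ≠ 0 → e ∈ T := by
  rw [monIdeal, mem_ideal_span_monomial_image]
  simp only [mem_support_iff]
  refine forall_congr' fun e => imp_congr_right fun _ => ⟨?_, fun h => ⟨e, h, le_rfl⟩⟩
  rintro ⟨t, ht, hle⟩
  exact hT hle ht

variable (K) in
/-- The grading induced on the quotient by a monomial ideal. -/
noncomputable def quotGr (T : Set (Fin n →₀ ℕ)) : Gr n K (S n K ⧸ monIdeal K T) where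
  D k := (polyGr.D k).map (monIdeal K T).mkQ.toAddMonoidHom
  smul_mem := by
    rintro e k p _ hp ⟨m, hm, rfl⟩
    exact ⟨p • m, polyGr.smul_mem hp hm, (monIdeal K T).mkQ.map_smul p m⟩

lemma isHomogeneous_iff {k : ℕ} {p : S n K} :
    p.IsHomogeneous k ↔ ∀ e, coeff e p ≠ 0 → e.degree = k := by
  refine forall_congr' fun e => ?_
  rw [Finsupp.degree_eq_weight_one]
  rfl

lemma mem_quotGr {T : Set (Fin n →₀ ℕ)} (hT : IsUpperSet T) {k : ℕ} {p : S n K} :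
    (monIdeal K T).mkQ p ∈ (quotGr K T).D k ↔ ∀ e, coeff e p ≠ 0 → e ∈ T ∨ e.degree = k := by
  constructor
  · rintro ⟨h, hh, hp⟩ e he
    have hh : h.IsHomogeneous k := hh
    have hp : h - p ∈ monIdeal K T := (Submodule.Quotient.eq _).1 hp
    by_cases h0 : coeff e h = 0
    · left
      exact (mem_monIdeal hT).1 hp e (by simpa [h0] using he)
    · exact Or.inr (isHomogeneous_iff.1 hh e h0)
  · intro h
    refine ⟨homogeneousComponent k p, homogeneousComponent_isHomogeneous k p, ?_⟩
    refine (Submodule.Quotient.eq _).2 ((mem_monIdeal hT).2 fun e he => ?_)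
    rw [coeff_sub, coeff_homogeneousComponent] at he
    split_ifs at he with hk
    · simp at he
    · exact (h e (by simpa using he)).resolve_right hk

variable (K) in
/-- The quotient by the monomial ideal of `T` has regularity at most `r`. -/
def QReg (T : Set (Fin n →₀ ℕ)) (r : ℕ) : Prop := HasReg (S n K ⧸ monIdeal K T) (quotGr K T) r

lemma hasReg_poly (r : ℕ) : HasReg (S n K) polyGr r := by
  have h := HasReg.free (n := n) (K := K) (ι := Unit) (s := fun _ => 0) (r := r)
    (fun _ => Nat.zero_le _)
  refine h.equiv (LinearEquiv.funUnique Unit (S n K) (S n K)) 0 ?_ (by intro k m h; omega)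
  intro k f
  constructor
  · intro h
    rcases h () with h | ⟨e, he, h⟩
    · show f () ∈ _
      rw [h]
      exact zero_mem _
    · obtain rfl : k = e := by simpa using he
      exact h
  · intro h a
    exact Or.inr ⟨k, by simp, h⟩

lemma QReg.empty (r : ℕ) : QReg (n := n) K ∅ r := by
  have h0 : monIdeal (n := n) K ∅ = ⊥ := by simp [monIdeal]
  refine (hasReg_poly r).equiv (Submodule.quotEquivOfEqBot _ h0).symm 0 ?_
    (by intro k m h; omega)
  intro k p
  have : (Submodule.quotEquivOfEqBot _ h0).symm p = (monIdeal K ∅).mkQ p := rfl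
  rw [this, mem_quotGr isUpperSet_empty]
  simp [mem_polyGr, isHomogeneous_iff]

lemma QReg.univ (r : ℕ) : QReg (n := n) K Set.univ r := by
  have : monIdeal (n := n) K Set.univ = ⊤ := by
    refine eq_top_iff.2 fun p _ => (mem_monIdeal isUpperSet_univ).2 fun _ _ => trivial
  have : Subsingleton (S n K ⧸ monIdeal (n := n) K Set.univ) :=
    Submodule.Quotient.subsingleton_iff.2 this
  exact HasReg.of_subsingleton _ _

lemma QReg.mono {T : Set (Fin n →₀ ℕ)} {r r' : ℕ} (h : QReg K T r) (hr : r ≤ r') : QReg K T r' :=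
  HasReg.mono h hr

lemma isUpperSet_colon {T : Set (Fin n →₀ ℕ)} (hT : IsUpperSet T) (m : Fin n →₀ ℕ) :
    IsUpperSet {e | e + m ∈ T} := fun _ _ h he => hT (add_le_add_left h m) he

lemma isUpperSet_insert {T : Set (Fin n →₀ ℕ)} (hT : IsUpperSet T) (m : Fin n →₀ ℕ) :
    IsUpperSet (T ∪ {e | m ≤ e}) := hT.union fun _ _ h he => le_trans (α := Fin n →₀ ℕ) he h

/-- Conditions on the exponents of `x^m p`, expressed in terms of the exponents of `p`. -/
lemma coeff_colon (m : Fin n →₀ ℕ) (p : S n K)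
    (P : (Fin n →₀ ℕ) → Prop) :
    (∀ e, coeff e (monomial m 1 * p) ≠ 0 → P e) ↔ ∀ e, coeff e p ≠ 0 → P (e + m) := by
  constructor
  · intro h e he
    refine h _ ?_
    rw [add_comm, coeff_monomial_mul, one_mul]
    exact he
  · intro h e he
    rw [coeff_monomial_mul'] at he
    split_ifs at he with hm
    · have := h (e - m) (by simpa using he)
      rwa [tsub_add_cancel_of_le hm] at this
    · exact absurd rfl he

/-- The exact sequence `0 → (S / (J : x^m))(-|m|) → S / J → S / (J, x^m) → 0` for a monomial ideal
`J`. The shifted grading on the left is the one induced from the middle term. -/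
lemma exists_ses {T : Set (Fin n →₀ ℕ)} (hT : IsUpperSet T) (m : Fin n →₀ ℕ) {r : ℕ}
    (h : QReg K {e | e + m ∈ T} r) :
    ∃ gA : Gr n K (S n K ⧸ monIdeal K {e | e + m ∈ T}), HasReg _ gA (r + m.degree) ∧
      Nonempty (SES gA (quotGr K T) (quotGr K (T ∪ {e | m ≤ e}))) := by
  have hT' := isUpperSet_colon hT m
  have hT'' := isUpperSet_insert hT m
  have hcol : ∀ p : S n K, monomial m 1 * p ∈ monIdeal K T ↔ p ∈ monIdeal K {e | e + m ∈ T} := by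
    intro p
    rw [mem_monIdeal hT, mem_monIdeal hT']
    exact coeff_colon m p (fun e => e ∈ T)
  let i : (S n K ⧸ monIdeal K {e | e + m ∈ T}) →ₗ[S n K] (S n K ⧸ monIdeal K T) :=
    Submodule.mapQ _ _ (LinearMap.mulLeft (S n K) (monomial m 1)) fun p hp => (hcol p).2 hp
  have hi : ∀ p, i (Submodule.mkQ _ p) = (monIdeal K T).mkQ (monomial m 1 * p) := fun p => rfl
  have hle : monIdeal K T ≤ monIdeal K (T ∪ {e | m ≤ e}) :=
    Ideal.span_mono (Set.image_mono Set.subset_union_left)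
  refine ⟨(quotGr K T).comap i, ?_, ⟨?_⟩⟩
  · refine HasReg.equiv h (LinearEquiv.refl _ _) m.degree ?_ ?_
    · intro k q
      obtain ⟨p, rfl⟩ := Submodule.mkQ_surjective _ q
      rw [mem_quotGr hT', LinearEquiv.refl_apply, Gr.mem_comap, hi, mem_quotGr hT,
        coeff_colon m p (fun e => e ∈ T ∨ e.degree = k + m.degree)]
      simp [map_add]
    · intro k q hk hq
      obtain ⟨p, rfl⟩ := Submodule.mkQ_surjective _ q
      rw [LinearEquiv.refl_apply, Gr.mem_comap, hi, mem_quotGr hT,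
        coeff_colon m p (fun e => e ∈ T ∨ e.degree = k)] at hq
      refine (Submodule.Quotient.mk_eq_zero _).2 ((mem_monIdeal hT').2 fun e he => ?_)
      refine (hq e he).resolve_right ?_
      rw [map_add]
      omega
  · refine
      { i := i
        p := Submodule.factor hle
        inj := ?_, surj := Submodule.factor_surjective hle
        zero := ?_, exact := ?_, memA := fun _ _ => Iff.rfl, memB := ?_, lift := ?_ }
    · rw [injective_iff_map_eq_zero]
      intro q hq
      obtain ⟨p, rfl⟩ := Submodule.mkQ_surjective _ q
      rw [hi] at hq
      exact (Submodule.Quotient.mk_eq_zero _).2 ((hcol p).1 ((Submodule.Quotient.mk_eq_zero _).1 hq))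
    · intro q
      obtain ⟨p, rfl⟩ := Submodule.mkQ_surjective _ q
      rw [hi]
      refine (Submodule.Quotient.mk_eq_zero _).2 ((mem_monIdeal hT'').2 ?_)
      exact (coeff_colon m p _).2 fun e _ => Or.inr (le_add_self (a := m) (b := e))
    · intro q hq
      obtain ⟨p, rfl⟩ := Submodule.mkQ_surjective _ q
      have hq : p ∈ monIdeal K (T ∪ {e | m ≤ e}) := (Submodule.Quotient.mk_eq_zero _).1 hq
      have hsplit : monIdeal K (T ∪ {e | m ≤ e}) ≤ monIdeal K T ⊔ Ideal.span {monomial m 1} := by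
        refine Ideal.span_le.2 ?_
        rintro _ ⟨e, he | he, rfl⟩
        · exact Ideal.mem_sup_left (Ideal.subset_span ⟨e, he, rfl⟩)
        · refine Ideal.mem_sup_right (Ideal.mem_span_singleton.2 ⟨monomial (e - m) 1, ?_⟩)
          rw [monomial_mul, add_tsub_cancel_of_le he, one_mul]
      obtain ⟨a, ha, b, hb, rfl⟩ := Submodule.mem_sup.1 (hsplit hq)
      obtain ⟨c, rfl⟩ := Ideal.mem_span_singleton.1 hb
      refine ⟨Submodule.mkQ _ c, ?_⟩
      rw [hi]
      refine (Submodule.Quotient.eq _).2 ?_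
      simpa using ha
    · rintro k _ ⟨p, hp, rfl⟩
      exact ⟨p, hp, rfl⟩
    · rintro k _ ⟨p, hp, rfl⟩
      exact ⟨Submodule.mkQ _ p, ⟨p, hp, rfl⟩, rfl⟩

/-- `reg S/J ≤ max (reg S/(J : x^m) + |m|, reg S/(J, x^m))`. -/
lemma QReg.split {T : Set (Fin n →₀ ℕ)} (hT : IsUpperSet T) (m : Fin n →₀ ℕ) {r r₁ : ℕ}
    (h : QReg K {e | e + m ∈ T} r₁) (hr : r₁ + m.degree ≤ r) (hs : QReg K (T ∪ {e | m ≤ e}) r) :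
    QReg K T r := by
  obtain ⟨gA, hA, ⟨E⟩⟩ := exists_ses hT m h
  exact E.middle (hA.mono hr) hs

/-- `reg S/(J, x^m) ≤ max (reg S/(J : x^m) + |m| - 1, reg S/J)`. -/
lemma QReg.insert {T : Set (Fin n →₀ ℕ)} (hT : IsUpperSet T) (m : Fin n →₀ ℕ) {r r₁ : ℕ}
    (h : QReg K {e | e + m ∈ T} r₁) (hr : r₁ + m.degree ≤ r + 1) (hs : QReg K T r) :
    QReg K (T ∪ {e | m ≤ e}) r := by
  obtain ⟨gA, hA, ⟨E⟩⟩ := exists_ses hT m h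
  exact E.right (hA.mono hr) hs

/-- `reg J ≤ reg S/J + 1`. -/
lemma QReg.toIdeal {T : Set (Fin n →₀ ℕ)} {r : ℕ} (h : QReg K T r) :
    HasReg (monIdeal K T) (polyGr.comap (monIdeal K T).subtype) (r + 1) := by
  have E : SES (polyGr.comap (monIdeal K T).subtype) polyGr (quotGr K T) :=
    { i := (monIdeal K T).subtype
      p := (monIdeal K T).mkQ
      inj := Subtype.val_injective
      surj := Submodule.mkQ_surjective _
      zero := fun a => (Submodule.Quotient.mk_eq_zero _).2 a.2
      exact := fun b hb => ⟨⟨b, (Submodule.Quotient.mk_eq_zero _).1 hb⟩, rfl⟩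
      memA := fun _ _ => Iff.rfl
      memB := fun k b hb => ⟨b, hb, rfl⟩
      lift := fun k c hc => hc }
  exact E.left (hasReg_poly _) h

end monomials

/-! ### Bipartite relations with nested neighbourhoods -/

section nested

variable {n : ℕ} {K : Type} [Field K]

/-- The exponents of the monomials in the ideal generated by the variables in `U` and the products
`x_u x_v` with `R i u v` for some `i < r`. -/
def graphSet (R : ℕ → Fin n → Fin n → Prop) (r : ℕ) (U : Set (Fin n)) : Set (Fin n →₀ ℕ) :=
  {e | (∃ u ∈ U, 1 ≤ e u) ∨ ∃ i < r, ∃ u v, R i u v ∧ 1 ≤ e u ∧ 1 ≤ e v}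

lemma isUpperSet_graphSet (R : ℕ → Fin n → Fin n → Prop) (r : ℕ) (U : Set (Fin n)) :
    IsUpperSet (graphSet R r U) := by
  rintro e f hef (⟨u, hu, h⟩ | ⟨i, hi, u, v, h, hu, hv⟩)
  · exact Or.inl ⟨u, hu, h.trans (hef u)⟩
  · exact Or.inr ⟨i, hi, u, v, h, hu.trans (hef u), hv.trans (hef v)⟩

lemma single_le_iff' {x : Fin n} {e : Fin n →₀ ℕ} : Finsupp.single x 1 ≤ e ↔ 1 ≤ e x := by
  simp

lemma graphSet_insert (R : ℕ → Fin n → Fin n → Prop) (r : ℕ) (U : Set (Fin n)) (x : Fin n) :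
    graphSet R r U ∪ {e | Finsupp.single x 1 ≤ e} = graphSet R r (insert x U) := by
  ext e
  simp only [graphSet, Set.mem_union, Set.mem_ofPred_eq, single_le_iff', Set.mem_insert_iff,
    exists_eq_or_imp]
  rw [or_right_comm, or_comm (b := 1 ≤ e x)]

variable (K) in
/-- Quotients by ideals generated by variables have regularity `0`. -/
lemma qreg_variables (R : ℕ → Fin n → Fin n → Prop) (U : Set (Fin n)) :
    QReg K (graphSet R 0 U) 0 := by
  induction U, Set.toFinite U using Set.Finite.induction_on with
  | empty =>
    have : graphSet R 0 ∅ = ∅ := by ext e; simp [graphSet]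
    rw [this]
    exact QReg.empty 0
  | @insert x U hx _ ih =>
    rw [← graphSet_insert]
    refine QReg.insert (isUpperSet_graphSet _ _ _) _ (r₁ := 0) ?_ (by simp) ih
    convert ih using 1
    ext e
    simp only [graphSet, Set.mem_ofPred_eq, Nat.not_lt_zero, false_and, exists_false, or_false]
    refine exists_congr fun u => and_congr_right fun hu => ?_
    have : x ≠ u := by rintro rfl; exact hx hu
    simp [this]

variable (K) in
/-- If an edge ideal is the union of `r` bipartite relations `R i` on `(X, Xᶜ)` whose neighbourhoods
in `X` are linearly ordered by inclusion, then the quotient has regularity at most `r`, even after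
adding variables to the ideal. Splitting off a vertex `x` with the largest `R (r - 1)`-neighbourhood
among the vertices outside `U`, the colon ideal contains that neighbourhood and so no longer needs
`R (r - 1)`, while the sum with `x` has a larger set of variables. -/
lemma qreg_graphSet {R : ℕ → Fin n → Fin n → Prop} {X : Set (Fin n)}
    (hX : ∀ i u v, R i u v → u ∈ X ∧ v ∉ X)
    (hR : ∀ i u u', (∀ v, R i u v → R i u' v) ∨ (∀ v, R i u' v → R i u v)) (r : ℕ) :
    ∀ U : Set (Fin n), QReg K (graphSet R r U) r := by
  induction r with
  | zero => exact qreg_variables K R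
  | succ r ih =>
    intro U
    induction hN : Uᶜ.ncard using Nat.strong_induction_on generalizing U with
    | _ N IH =>
    by_cases hcov : ∀ u v, R r u v → u ∈ U ∨ v ∈ U
    · have : graphSet R (r + 1) U = graphSet R r U := by
        ext e
        constructor
        · rintro (h | ⟨i, hi, u, v, h, hu, hv⟩)
          · exact Or.inl h
          · rcases Nat.lt_succ_iff_lt_or_eq.1 hi with hi | rfl
            · exact Or.inr ⟨i, hi, u, v, h, hu, hv⟩
            · rcases hcov u v h with h | h
              · exact Or.inl ⟨u, h, hu⟩
              · exact Or.inl ⟨v, h, hv⟩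
        · rintro (h | ⟨i, hi, h⟩)
          · exact Or.inl h
          · exact Or.inr ⟨i, hi.trans (Nat.lt_succ_self r), h⟩
      rw [this]
      exact (ih U).mono (Nat.le_succ r)
    · push Not at hcov
      obtain ⟨u₀, v₀, h₀, hu₀, hv₀⟩ := hcov
      -- Among nested neighbourhoods, one of largest cardinality contains all the others.
      obtain ⟨x, hxU, hmax⟩ := Set.exists_max_image Uᶜ (fun u => {v | R r u v}.ncard)
        (Set.toFinite _) ⟨u₀, hu₀⟩
      have hmax' : ∀ u, u ∉ U → ∀ v, R r u v → R r x v := by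
        intro u hu
        rcases hR r u x with h | h
        · exact h
        · have : {v | R r x v} = {v | R r u v} :=
            Set.eq_of_subset_of_ncard_le (fun v hv => h v hv) (hmax u hu) (Set.toFinite _)
          intro v hv
          have hv : v ∈ {v | R r u v} := hv
          rwa [← this] at hv
      have hxX : x ∈ X := (hX _ _ _ (hmax' u₀ hu₀ v₀ h₀)).1
      refine QReg.split (isUpperSet_graphSet _ _ _) (Finsupp.single x 1) (r₁ := r) ?_ (by simp) ?_
      · convert ih (U ∪ {v | ∃ i < r + 1, R i x v}) using 1
        ext e
        constructor
        · rintro (⟨u, hu, h⟩ | ⟨i, hi, u, v, h, hu, hv⟩)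
          · refine Or.inl ⟨u, Or.inl hu, ?_⟩
            have : x ≠ u := by rintro rfl; exact hxU hu
            simpa [Finsupp.single_apply, this] using h
          · have hxv : x ≠ v := by rintro rfl; exact (hX _ _ _ h).2 hxX
            replace hv : 1 ≤ e v := by simpa [Finsupp.single_apply, hxv] using hv
            by_cases hxu : x = u
            · subst hxu
              exact Or.inl ⟨v, Or.inr ⟨i, hi, h⟩, hv⟩
            · replace hu : 1 ≤ e u := by simpa [Finsupp.single_apply, hxu] using hu
              rcases Nat.lt_succ_iff_lt_or_eq.1 hi with hi | rfl
              · exact Or.inr ⟨i, hi, u, v, h, hu, hv⟩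
              · by_cases huU : u ∈ U
                · exact Or.inl ⟨u, Or.inl huU, hu⟩
                · exact Or.inl ⟨v, Or.inr ⟨i, hi, hmax' u huU v h⟩, hv⟩
        · have hle : ∀ u, e u ≤ (e + Finsupp.single x 1 : Fin n →₀ ℕ) u := fun u => by simp
          rintro (⟨u, hu | ⟨i, hi, hu⟩, h⟩ | ⟨i, hi, u, v, h, hu, hv⟩)
          · exact Or.inl ⟨u, hu, h.trans (hle u)⟩
          · exact Or.inr ⟨i, hi, x, u, hu, by simp, h.trans (hle u)⟩
          · exact Or.inr ⟨i, hi.trans (Nat.lt_succ_self r), u, v, h, hu.trans (hle u),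
              hv.trans (hle v)⟩
      · rw [graphSet_insert]
        refine IH _ ?_ _ rfl
        rw [← hN]
        refine Set.ncard_lt_ncard ?_ (Set.toFinite _)
        exact compl_lt_compl_iff_lt.2 (Set.ssubset_insert hxU)

end nested

/-! ### Products of edges in a bipartite graph -/

section exchange

variable {n : ℕ} (G : SimpleGraph (Fin n)) (X : Set (Fin n))

local notation "ε" x => (Finsupp.single x 1 : Fin n →₀ ℕ)

/-- The exponents of the products of `q` edges of `G`. -/
def Gen : ℕ → Set (Fin n →₀ ℕ)
  | 0 => {0}
  | q + 1 => {e | ∃ g ∈ Gen q, ∃ u v, G.Adj u v ∧ e = g + (ε u) + (ε v)}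

variable {G X}

lemma Gen.add {q : ℕ} {g : Fin n →₀ ℕ} (hg : g ∈ Gen G q) {u v : Fin n} (h : G.Adj u v) :
    g + (ε u) + (ε v) ∈ Gen G (q + 1) := ⟨g, hg, u, v, h, rfl⟩

lemma eps_self (u : Fin n) : (ε u) u = 1 := by simp

lemma eps_ne {u v : Fin n} (h : u ≠ v) : (ε u) v = 0 := by simp [h]

/-- A product of edges divisible by `x_u` has a factorization containing an edge at `u`. -/
lemma Gen.remove {q : ℕ} : ∀ {c : Fin n →₀ ℕ} {u : Fin n}, c ∈ Gen G (q + 1) → 1 ≤ c u →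
    ∃ g ∈ Gen G q, ∃ y, G.Adj u y ∧ c = g + (ε u) + (ε y) := by
  induction q with
  | zero =>
    rintro c u ⟨g, hg, u', v', h, rfl⟩ hu
    obtain rfl : g = 0 := hg
    by_cases h1 : u' = u
    · subst h1; exact ⟨0, rfl, v', h, rfl⟩
    · by_cases h2 : v' = u
      · subst h2; exact ⟨0, rfl, u', h.symm, by abel⟩
      · simp [h1, h2] at hu
  | succ q ih =>
    rintro c u ⟨g, hg, u', v', h, rfl⟩ hu
    by_cases h1 : u' = u
    · subst h1; exact ⟨g, hg, v', h, rfl⟩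
    · by_cases h2 : v' = u
      · subst h2; exact ⟨g, hg, u', h.symm, by abel⟩
      · obtain ⟨g', hg', y, hy, rfl⟩ := ih hg (u := u) (by simpa [h1, h2] using hu)
        exact ⟨_, Gen.add hg' h, y, hy, by abel⟩

lemma Gen.finite (q : ℕ) : (Gen G q).Finite := by
  induction q with
  | zero => exact Set.finite_singleton _
  | succ q ih =>
    refine (((ih.prod (Set.toFinite (Set.univ : Set (Fin n × Fin n)))).image
      fun p => p.1 + (ε p.2.1) + (ε p.2.2))).subset ?_
    rintro _ ⟨g, hg, u, v, -, rfl⟩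
    exact ⟨(g, (u, v)), ⟨hg, trivial⟩, rfl⟩

lemma Gen.degree {q : ℕ} : ∀ {g : Fin n →₀ ℕ}, g ∈ Gen G q → g.degree = 2 * q := by
  induction q with
  | zero =>
    rintro g rfl
    simp
  | succ q ih =>
    rintro _ ⟨g, hg, u, v, -, rfl⟩
    simp only [map_add, ih hg, Finsupp.degree_single]
    omega

open scoped Classical in
/-- A product of `q` edges has degree `q` in the variables of `X`. -/
lemma Gen.degreeX (hX : ∀ u v, G.Adj u v → (u ∈ X ↔ v ∉ X)) {q : ℕ} :
    ∀ {g : Fin n →₀ ℕ}, g ∈ Gen G q → ∑ x with x ∈ X, g x = q := by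
  induction q with
  | zero =>
    rintro g rfl
    simp
  | succ q ih =>
    rintro _ ⟨g, hg, u, v, h, rfl⟩
    have := hX u v h
    simp only [Finsupp.add_apply, Finset.sum_add_distrib, ih hg, Finsupp.single_apply,
      Finset.sum_ite_eq, Finset.mem_filter, Finset.mem_univ, true_and]
    by_cases hu : u ∈ X <;> by_cases hv : v ∈ X <;> simp_all

/-- Exchange property. If `x_z` divides the edge product `b` to a higher power than the `q`-fold edge
product `a`, then either a factor `x_w` with surplus in `a` can be replaced by `x_z`, giving another
`q`-fold product, or multiplying `a` by `x_z x_w`, with `w` in surplus in `b` and on the other side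
of the bipartition, gives a `(q + 1)`-fold product. The proof follows an alternating walk starting
at `z`, using an edge of `b`, then an edge of `a`, and so on. -/
lemma Gen.exchange (hX : ∀ u v, G.Adj u v → (u ∈ X ↔ v ∉ X)) {q : ℕ} :
    ∀ {p : ℕ} {a b : Fin n →₀ ℕ} {z : Fin n}, a ∈ Gen G q → b ∈ Gen G p → a z < b z →
      (∃ w, b w < a w ∧ ∃ g ∈ Gen G q, g + (ε w) = a + (ε z)) ∨
      (∃ w, a w < b w ∧ (z ∈ X ↔ w ∉ X) ∧ a + (ε z) + (ε w) ∈ Gen G (q + 1)) := by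
  induction q with
  | zero =>
    intro p a b z ha hb hz
    obtain ⟨p, rfl⟩ : ∃ k, p = k + 1 := by
      rcases p with _ | p
      · obtain rfl : b = 0 := hb
        simp at hz
      · exact ⟨p, rfl⟩
    obtain ⟨b', hb', w, hw, rfl⟩ := Gen.remove hb (u := z) (by omega)
    obtain rfl : a = 0 := ha
    exact Or.inr ⟨w, by simp, hX _ _ hw, Gen.add rfl hw⟩
  | succ q ih =>
    intro p a b z ha hb hz
    obtain ⟨p, rfl⟩ : ∃ k, p = k + 1 := by
      rcases p with _ | p
      · obtain rfl : b = 0 := hb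
        simp at hz
      · exact ⟨p, rfl⟩
    obtain ⟨b', hb', w, hw, rfl⟩ := Gen.remove hb (u := z) (by omega)
    by_cases haw : a w < (b' + (ε z) + (ε w)) w
    · exact Or.inr ⟨w, haw, hX _ _ hw, Gen.add ha hw⟩
    · obtain ⟨a', ha', z', hz', rfl⟩ := Gen.remove ha (u := w)
        (by simp only [Finsupp.add_apply, eps_self] at haw ⊢; omega)
      have hzw : z ≠ w := hw.ne
      by_cases hz'' : (b' + (ε z) + (ε w)) z' < (a' + (ε w) + (ε z')) z'
      · exact Or.inl ⟨z', hz'', _, Gen.add ha' hw, by abel⟩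
      · have hwz' : w ≠ z' := hz'.ne
        have h1 : a' z' < b' z' := by
          by_cases hzz' : z = z'
          · subst hzz'
            simp only [Finsupp.add_apply, eps_self, eps_ne hwz'] at hz
            omega
          · simp only [Finsupp.add_apply, eps_self, eps_ne hwz', eps_ne hzz'] at hz''
            omega
        -- The edge `z w` of `b` and the edge `w z'` of `a` are dropped, and the walk goes on at `z'`.
        rcases ih ha' hb' h1 with ⟨w', hw', g, hg, hgw⟩ | ⟨w', hw', hXw, hg⟩
        · refine Or.inl ⟨w', ?_, _, Gen.add hg hw, ?_⟩
          · have h2 : z ≠ w' := by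
              rintro rfl
              simp only [Finsupp.add_apply, eps_self, eps_ne hzw.symm] at hz
              omega
            simp only [Finsupp.add_apply, eps_ne h2]
            omega
          · calc g + (ε z) + (ε w) + (ε w') = (g + ε w') + (ε z) + (ε w) := by abel
              _ = _ := by rw [hgw]; abel
        · have hX1 := hX _ _ hw
          have hX2 := hX _ _ hz'
          have h2 : z' ≠ w' := by rintro rfl; tauto
          refine Or.inr ⟨w', ?_, by tauto, ?_⟩
          · simp only [Finsupp.add_apply, eps_ne h2]
            omega
          · have := Gen.add hg hw
            convert this using 1
            abel

/-- Augmentation along an alternating walk: a product `a` of `q` edges can be multiplied by some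
`x_u x_v`, with both `u ∈ X` and `v ∉ X` in surplus in a given longer edge product `c`, so as to
become a product of `q + 1` edges. -/
lemma Gen.extend (hX : ∀ u v, G.Adj u v → (u ∈ X ↔ v ∉ X)) {q : ℕ} :
    ∀ {p : ℕ} {a c : Fin n →₀ ℕ}, q < p → a ∈ Gen G q → c ∈ Gen G p →
      ∃ u ∈ X, ∃ v, v ∉ X ∧ a u < c u ∧ a v < c v ∧ a + (ε u) + (ε v) ∈ Gen G (q + 1) := by
  classical
  induction q with
  | zero =>
    intro p a c hp ha hc
    obtain ⟨p, rfl⟩ : ∃ k, p = k + 1 := ⟨p - 1, by omega⟩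
    obtain ⟨c', -, u, v, huv, rfl⟩ := hc
    obtain rfl : a = 0 := ha
    have := hX _ _ huv
    by_cases hu : u ∈ X
    · exact ⟨u, hu, v, by tauto, by simp, by simp, Gen.add rfl huv⟩
    · exact ⟨v, by tauto, u, hu, by simp, by simp, Gen.add rfl huv.symm⟩
  | succ q ih =>
    intro p a c hp ha hc
    obtain ⟨z, hzX, hz⟩ : ∃ z ∈ X, a z < c z := by
      by_contra! hcon
      have h1 := Gen.degreeX hX ha
      have h2 := Gen.degreeX hX hc
      have h3 : ∑ x with x ∈ X, c x ≤ ∑ x with x ∈ X, a x :=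
        Finset.sum_le_sum fun x hx => hcon x (by simpa using hx)
      have e1 : ∑ x with x ∈ X, a x = q + 1 := by convert h1
      have e2 : ∑ x with x ∈ X, c x = p := by convert h2
      omega
    obtain ⟨p, rfl⟩ : ∃ k, p = k + 1 := ⟨p - 1, by omega⟩
    obtain ⟨c', hc', w, hw, rfl⟩ := Gen.remove hc (u := z) (by omega)
    have hX1 := hX _ _ hw
    by_cases haw : a w < (c' + (ε z) + (ε w)) w
    · exact ⟨z, hzX, w, by tauto, hz, haw, Gen.add ha hw⟩
    · obtain ⟨a', ha', z', hz', rfl⟩ := Gen.remove ha (u := w)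
        (by simp only [Finsupp.add_apply, eps_self] at haw ⊢; omega)
      have hX2 := hX _ _ hz'
      have hzw : z ≠ w := hw.ne
      obtain ⟨u, hu, v, hv, hau, hav, hg⟩ := ih (by omega) ha' hc'
      have huw : w ≠ u := by rintro rfl; tauto
      have hz'v : z' ≠ v := by rintro rfl; tauto
      have hv' : (a' + (ε w) + (ε z')) v < (c' + (ε z) + (ε w)) v := by
        simp only [Finsupp.add_apply, eps_ne hz'v]
        omega
      by_cases huz : z' = u ∧ z' ≠ z
      · obtain ⟨rfl, huz⟩ := huz
        refine ⟨z, hzX, v, hv, hz, hv', ?_⟩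
        have := Gen.add hg hw
        convert this using 1
        abel
      · refine ⟨u, hu, v, hv, ?_, hv', ?_⟩
        · by_cases h : z' = u
          · subst h
            obtain rfl : z' = z := by tauto
            exact hz
          · simp only [Finsupp.add_apply, eps_ne h, eps_ne huw]
            omega
        · have := Gen.add hg hz'
          convert this using 1
          abel

/-! ### The lexicographic filtration between consecutive powers -/

/-- The exponents of the monomials divisible by a monomial with exponent in `A`. -/
def up (A : Set (Fin n →₀ ℕ)) : Set (Fin n →₀ ℕ) := {e | ∃ g ∈ A, g ≤ e}

lemma isUpperSet_up (A : Set (Fin n →₀ ℕ)) : IsUpperSet (up A) := by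
  rintro e f hef ⟨g, hg, h⟩
  exact ⟨g, hg, le_trans (α := Fin n →₀ ℕ) h hef⟩

lemma up_insert (A : Set (Fin n →₀ ℕ)) (m : Fin n →₀ ℕ) :
    up (insert m A) = up A ∪ {e | m ≤ e} := by
  ext e
  simp [up, or_comm]

/-- The key colon computation. Let `A` be the set of `q`-fold edge products lexicographically larger
than the `q`-fold product `m`. Then `((I^(q+1) + (A)) : m)` is generated by variables and by the
products `x_u x_v`, where `v ∉ X` and `x^m x_v / x_y` is a `q`-fold product for some neighbour `y` of
`u`. Grouping by the `R i` containing `u y` again gives relations with nested neighbourhoods. -/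
lemma colon_eq (hX : ∀ u v, G.Adj u v → (u ∈ X ↔ v ∉ X)) {q r : ℕ}
    {R : ℕ → Fin n → Fin n → Prop} (hR1 : ∀ i u v, R i u v → G.Adj u v ∧ u ∈ X)
    (hR2 : ∀ u v, G.Adj u v → u ∈ X → ∃ i < r, R i u v)
    {A : Set (Fin n →₀ ℕ)} {m : Fin n →₀ ℕ} (hAG : A ⊆ Gen G q) (hm : m ∈ Gen G q)
    (hA1 : ∀ b ∈ A, toLex m < toLex b) (hA2 : ∀ g ∈ Gen G q, toLex m < toLex g → g ∈ A) :
    {e | e + m ∈ up (Gen G (q + 1)) ∪ up A} =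
      graphSet (fun i u v => v ∉ X ∧ ∃ y, R i u y ∧ ∃ g ∈ Gen G q, g + (ε y) = m + (ε v)) r
        {z | m + (ε z) ∈ up A} := by
  have key : ∀ u v, u ∈ X → v ∉ X → m + (ε u) + (ε v) ∈ Gen G (q + 1) →
      ∃ i < r, v ∉ X ∧ ∃ y, R i u y ∧ ∃ g ∈ Gen G q, g + (ε y) = m + (ε v) := by
    intro u v hu hv h
    obtain ⟨g, hg, y, hy, h⟩ := Gen.remove h (u := u) (by
      simp only [Finsupp.add_apply, eps_self]
      omega)
    obtain ⟨i, hi, hRi⟩ := hR2 u y hy hu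
    refine ⟨i, hi, hv, y, hRi, g, hg, add_right_cancel (b := ε u) ?_⟩
    rw [add_right_comm, ← h, add_right_comm]
  have hpos : ∀ {c e : Fin n →₀ ℕ} {u : Fin n}, c ≤ e + m → m u < c u → 1 ≤ e u := by
    intro c e u hc hu
    have := hc u
    simp only [Finsupp.add_apply] at this
    omega
  ext e
  constructor
  · rintro (⟨c, hc, hce⟩ | ⟨b, hb, hbe⟩)
    · obtain ⟨u, hu, v, hv, hmu, hmv, h⟩ := Gen.extend hX (Nat.lt_succ_self q) hm hc
      obtain ⟨i, hi, h⟩ := key u v hu hv h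
      exact Or.inr ⟨i, hi, u, v, h, hpos hce hmu, hpos hce hmv⟩
    · obtain ⟨z, hlt, hz⟩ := Finsupp.Lex.lt_iff.1 (hA1 b hb)
      replace hlt : ∀ j < z, m j = b j := hlt
      replace hz : m z < b z := hz
      rcases Gen.exchange hX hm (hAG hb) hz with ⟨w, hw, g, hg, hgw⟩ | ⟨w, hw, hzw, h⟩
      · have hzw : z < w := by
          rcases lt_trichotomy z w with h | rfl | h
          · exact h
          · omega
          · have := hlt w h
            omega
        -- As `b` and `m` agree before `z`, the exponent `g = m + ε z - ε w` is lexicographically larger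
        -- than `m`.
        have hgA : g ∈ A := by
          refine hA2 g hg (Finsupp.Lex.lt_iff.2 ⟨z, fun j hj => ?_, ?_⟩)
          · have := DFunLike.congr_fun hgw j
            simp only [Finsupp.add_apply, eps_ne hj.ne', eps_ne (hj.trans hzw).ne'] at this
            exact this.symm
          · have := DFunLike.congr_fun hgw z
            simp only [Finsupp.add_apply, eps_self, eps_ne hzw.ne'] at this
            show m z < g z
            omega
        exact Or.inl ⟨z, ⟨g, hgA, hgw ▸ le_self_add (a := g)⟩, hpos hbe hz⟩
      · by_cases hzX : z ∈ X
        · obtain ⟨i, hi, h⟩ := key z w hzX (hzw.1 hzX) h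
          exact Or.inr ⟨i, hi, z, w, h, hpos hbe hz, hpos hbe hw⟩
        · have hwX : w ∈ X := by tauto
          rw [add_right_comm] at h
          obtain ⟨i, hi, h⟩ := key w z hwX hzX h
          exact Or.inr ⟨i, hi, w, z, h, hpos hbe hw, hpos hbe hz⟩
  · rintro (⟨z, hz, he⟩ | ⟨i, -, u, v, ⟨hv, y, hRi, g, hg, hgy⟩, heu, hev⟩)
    · refine Or.inr (isUpperSet_up A ?_ hz)
      rw [add_comm]
      exact add_le_add_left (single_le_iff'.2 he) m
    · obtain ⟨hadj, hu⟩ := hR1 _ _ _ hRi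
      refine Or.inl ⟨_, Gen.add hg hadj, ?_⟩
      have huv : u ≠ v := by rintro rfl; exact hv hu
      rw [add_right_comm, hgy]
      intro j
      simp only [Finsupp.add_apply]
      by_cases hju : u = j
      · subst hju
        rw [eps_self, eps_ne huv.symm]
        omega
      · by_cases hjv : v = j
        · subst hjv
          rw [eps_self, eps_ne hju]
          omega
        · rw [eps_ne hju, eps_ne hjv]
          omega

variable (K : Type) [Field K]

/-- The generators of `I^q` are added to `I^(q+1)` one at a time in decreasing lexicographic order;
`A` is the set of those already added. -/
lemma qreg_step (hX : ∀ u v, G.Adj u v → (u ∈ X ↔ v ∉ X)) {q r : ℕ}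
    {R : ℕ → Fin n → Fin n → Prop} (hR1 : ∀ i u v, R i u v → G.Adj u v ∧ u ∈ X)
    (hR2 : ∀ u v, G.Adj u v → u ∈ X → ∃ i < r, R i u v)
    (hR : ∀ i u u', (∀ v, R i u v → R i u' v) ∨ (∀ v, R i u' v → R i u v))
    (hbase : QReg K (up (Gen G q)) (2 * q + r)) :
    ∀ (N : ℕ) (A : Set (Fin n →₀ ℕ)), A ⊆ Gen G q →
      (∀ b ∈ A, ∀ g ∈ Gen G q, toLex b < toLex g → g ∈ A) → (Gen G q \ A).ncard = N →
      QReg K (up (Gen G (q + 1)) ∪ up A) (2 * q + r) := by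
  intro N
  induction N with
  | zero =>
    intro A hA _ hN
    have hfin : (Gen G q \ A).Finite := (Gen.finite q).subset Set.sdiff_subset
    have : A = Gen G q :=
      hA.antisymm (Set.sdiff_eq_empty.1 ((Set.ncard_eq_zero hfin).1 hN))
    subst this
    convert hbase using 1
    refine Set.union_eq_right.2 ?_
    rintro e ⟨_, ⟨g, hg, u, v, -, rfl⟩, he⟩
    refine ⟨g, hg, le_trans (α := Fin n →₀ ℕ) ?_ he⟩
    rw [add_assoc]
    exact le_self_add
  | succ N ih =>
    intro A hA hup hN
    have hfin : (Gen G q \ A).Finite := (Gen.finite q).subset Set.sdiff_subset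
    obtain ⟨m, ⟨hm, hmA⟩, hmax⟩ := Set.exists_max_image (Gen G q \ A) toLex hfin
      (Set.nonempty_of_ncard_ne_zero (by omega))
    have hA1 : ∀ b ∈ A, toLex m < toLex b := by
      intro b hb
      rcases lt_trichotomy (toLex m) (toLex b) with h | h | h
      · exact h
      · exact absurd (toLex.injective h ▸ hb) hmA
      · exact absurd (hup b hb m hm h) hmA
    have hA2 : ∀ g ∈ Gen G q, toLex m < toLex g → g ∈ A := by
      intro g hg h
      by_contra hgA
      exact absurd (hmax g ⟨hg, hgA⟩) (not_le.2 h)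
    refine QReg.split ((isUpperSet_up _).union (isUpperSet_up _)) m (r₁ := r) ?_ ?_ ?_
    · rw [colon_eq hX hR1 hR2 hA hm hA1 hA2]
      refine qreg_graphSet K (X := X) ?_ ?_ r _
      · rintro i u v ⟨hv, y, hy, -⟩
        exact ⟨(hR1 _ _ _ hy).2, hv⟩
      · intro i u u'
        refine (hR i u u').imp ?_ ?_ <;>
        · rintro h v ⟨hv, y, hy, hg⟩
          exact ⟨hv, y, h y hy, hg⟩
    · rw [Gen.degree hm, add_comm]
    · rw [Set.union_assoc, ← up_insert]
      refine ih _ (Set.insert_subset hm hA) ?_ ?_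
      · rintro b (rfl | hb) g hg h
        · exact Or.inr (hA2 g hg h)
        · exact Or.inr (hup b hb g hg h)
      · have : Gen G q \ insert m A = (Gen G q \ A) \ {m} := by
          ext x
          simp only [Set.mem_sdiff, Set.mem_insert_iff, Set.mem_singleton_iff]
          tauto
        rw [this, Set.ncard_sdiff_singleton_of_mem (Set.mem_sdiff_of_mem hm hmA), hN]
        rfl

/-- `reg S/I^(q+1) ≤ 2q + r` when `G` is covered by `r` relations with nested neighbourhoods. -/
lemma qreg_pow (hX : ∀ u v, G.Adj u v → (u ∈ X ↔ v ∉ X)) {r : ℕ}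
    {R : ℕ → Fin n → Fin n → Prop} (hR1 : ∀ i u v, R i u v → G.Adj u v ∧ u ∈ X)
    (hR2 : ∀ u v, G.Adj u v → u ∈ X → ∃ i < r, R i u v)
    (hR : ∀ i u u', (∀ v, R i u v → R i u' v) ∨ (∀ v, R i u' v → R i u v)) (q : ℕ) :
    QReg K (up (Gen G (q + 1))) (2 * q + r) := by
  have hstep : ∀ q, QReg K (up (Gen G q)) (2 * q + r) →
      QReg K (up (Gen G (q + 1))) (2 * q + r) := by
    intro q h
    have := qreg_step K hX hR1 hR2 hR h _ ∅ (Set.empty_subset _) (by simp) rfl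
    convert this using 1
    simp [up]
  induction q with
  | zero =>
    refine hstep 0 ?_
    have : up (Gen G 0) = Set.univ := by
      ext e
      simp [up, Gen]
    rw [this]
    exact QReg.univ _
  | succ q ih => exact hstep _ (ih.mono (by omega))

end exchange

/-! ### Co-chordal bipartite graphs -/

section cochordal

variable {n : ℕ} {G : SimpleGraph (Fin n)}

/-- In a bipartite graph with chordal complement, two vertices on the same side have comparable
neighbourhoods: otherwise `u, u', v, v'` is a cycle of the complement without a chord. -/
lemma nested_of_chordal {X : Set (Fin n)} (hX : ∀ u v, G.Adj u v → (u ∈ X ↔ v ∉ X))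
    {H : SimpleGraph (Fin n)} (hH : H ≤ G) (hc : Chordal Hᶜ) {u u' : Fin n} (hu : u ∈ X)
    (hu' : u' ∈ X) : (∀ v, H.Adj u v → H.Adj u' v) ∨ (∀ v, H.Adj u' v → H.Adj u v) := by
  by_contra! hcon
  obtain ⟨⟨v, huv, hn1⟩, v', hb1, hn2⟩ := hcon
  have hX' : ∀ {a b}, H.Adj a b → (a ∈ X ↔ b ∉ X) := fun h => hX _ _ (hH h)
  have hv : v ∉ X := (hX' huv).1 hu
  have hv' : v' ∉ X := (hX' hb1).1 hu'
  have n1 : u ≠ u' := by rintro rfl; exact hn1 huv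
  have n2 : v ≠ v' := by rintro rfl; exact hn1 hb1
  have n3 : u ≠ v := by rintro rfl; exact hv hu
  have n4 : u ≠ v' := by rintro rfl; exact hv' hu
  have n5 : u' ≠ v := by rintro rfl; exact hv hu'
  have n6 : u' ≠ v' := by rintro rfl; exact hv' hu'
  have a1 : Hᶜ.Adj u u' := ⟨n1, fun h => by have := hX' h; tauto⟩
  have a2 : Hᶜ.Adj u' v := ⟨n5, hn1⟩
  have a3 : Hᶜ.Adj v v' := ⟨n2, fun h => by have := hX' h; tauto⟩
  have a4 : Hᶜ.Adj v' u := ⟨n4.symm, fun h => hn2 h.symm⟩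
  obtain ⟨a, b, ha, hb, hab, he⟩ := hc u (.cons a1 (.cons a2 (.cons a3 (.cons a4 .nil)))) (by
    rw [SimpleGraph.Walk.cons_isCycle_iff]
    simp [n1, n2, n3, n4, n5, n6, n1.symm, n3.symm, n4.symm]) (by simp)
  have hne := hab.ne
  have hnH : ¬ H.Adj a b := hab.2
  have hb2 := huv.symm
  have hb3 := hb1.symm
  simp only [SimpleGraph.Walk.support_cons, SimpleGraph.Walk.support_nil, List.mem_cons,
    List.not_mem_nil, or_false] at ha hb
  simp only [SimpleGraph.Walk.edges_cons, SimpleGraph.Walk.edges_nil, List.mem_cons,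
    List.not_mem_nil, or_false, Sym2.eq_iff, not_or] at he
  rcases ha with rfl | rfl | rfl | rfl | rfl <;> rcases hb with rfl | rfl | rfl | rfl | rfl <;>
    simp_all

/-- A single edge is co-chordal: two crossing diagonals of a cycle cannot both be missing from the
complement. -/
lemma chordal_compl_edge (x y : Fin n) : Chordal (SimpleGraph.edge x y)ᶜ := by
  intro v w hw hlen
  have i1 := hw.getVert_injOn
  have i2 := hw.getVert_injOn'
  have j1 : ∀ {i j}, 1 ≤ i → i ≤ w.length → 1 ≤ j → j ≤ w.length → w.getVert i = w.getVert j →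
      i = j := fun h1 h2 h3 h4 h => i1 ⟨h1, h2⟩ ⟨h3, h4⟩ h
  have j2 : ∀ {i j}, i ≤ w.length - 1 → j ≤ w.length - 1 → w.getVert i = w.getVert j →
      i = j := fun h1 h2 h => i2 h1 h2 h
  have e02 : s(w.getVert 0, w.getVert 2) ∉ w.edges := by
    rw [SimpleGraph.Walk.mk_mem_edges_iff_exists]
    rintro ⟨i, hi, h⟩
    rcases Sym2.eq_iff.1 h with ⟨h1, h2⟩ | ⟨h1, h2⟩
    · obtain rfl := j2 (by omega) (by omega) h1
      have := j2 (by omega) (by omega) h2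
      omega
    · obtain rfl := j2 (by omega) (by omega) h1
      have := j2 (by omega) (by omega) h2
      omega
  have e13 : s(w.getVert 1, w.getVert 3) ∉ w.edges := by
    rw [SimpleGraph.Walk.mk_mem_edges_iff_exists]
    rintro ⟨i, hi, h⟩
    rcases Sym2.eq_iff.1 h with ⟨h1, h2⟩ | ⟨h1, h2⟩
    · obtain rfl := j2 (by omega) (by omega) h1
      have := j2 (by omega) (by omega) h2
      omega
    · obtain rfl := j2 (by omega) (by omega) h1
      have := j1 (by omega) (by omega) (by omega) (by omega) h2
      omega
  have n02 : w.getVert 0 ≠ w.getVert 2 := fun h => by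
    have := j2 (by omega) (by omega) h
    omega
  have n13 : w.getVert 1 ≠ w.getVert 3 := fun h => by
    have := j2 (by omega) (by omega) h
    omega
  have n01 : w.getVert 0 ≠ w.getVert 1 := fun h => by
    have := j2 (by omega) (by omega) h
    omega
  have n03 : w.getVert 0 ≠ w.getVert 3 := fun h => by
    have := j2 (by omega) (by omega) h
    omega
  by_cases h : (SimpleGraph.edge x y).Adj (w.getVert 0) (w.getVert 2)
  · refine ⟨_, _, w.getVert_mem_support 1, w.getVert_mem_support 3, ⟨n13, fun h' => ?_⟩, e13⟩
    rw [SimpleGraph.edge_adj] at h h'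
    grind
  · exact ⟨_, _, w.getVert_mem_support 0, w.getVert_mem_support 2, ⟨n02, h⟩, e02⟩

/-- The infimum defining `cochordNum G` is attained, since `G` is the union of its edges. -/
lemma cochordNum_spec (G : SimpleGraph (Fin n)) :
    ∃ f : Fin (cochordNum G) → SimpleGraph (Fin n),
      (∀ i, f i ≤ G ∧ Chordal (f i)ᶜ) ∧ (⨆ i, f i) = G := by
  classical
  refine Nat.sInf_mem (s := { r | ∃ f : Fin r → SimpleGraph (Fin n),
    (∀ i, f i ≤ G ∧ Chordal (f i)ᶜ) ∧ (⨆ i, f i) = G }) ?_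
  let ι := {p : Fin n × Fin n // G.Adj p.1 p.2}
  let e := Fintype.equivFin ι
  have hle : ∀ p : ι, SimpleGraph.edge p.1.1 p.1.2 ≤ G := by
    rintro ⟨⟨x, y⟩, h⟩
    exact (SimpleGraph.edge_le_iff _).2 (Or.inr h)
  refine ⟨Fintype.card ι, fun i => SimpleGraph.edge (e.symm i).1.1 (e.symm i).1.2,
    fun i => ⟨hle _, chordal_compl_edge _ _⟩, le_antisymm (iSup_le fun i => hle _) ?_⟩
  intro x y h
  rw [SimpleGraph.iSup_adj]
  refine ⟨e ⟨(x, y), h⟩, ?_⟩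
  rw [e.symm_apply_apply]
  simp [SimpleGraph.edge_adj, h.ne]

end cochordal

/-! ### Resolutions of powers of the edge ideal -/

section conclusion

variable {n : ℕ} {K : Type} [Field K]

lemma monIdeal_up (T : Set (Fin n →₀ ℕ)) : monIdeal K (up T) = monIdeal K T := by
  refine le_antisymm (Ideal.span_le.2 ?_)
    (Ideal.span_mono (Set.image_mono fun g hg => ⟨g, hg, le_rfl⟩))
  rintro _ ⟨e, ⟨g, hg, hge⟩, rfl⟩
  have : monomial e (1 : K) = monomial (e - g) 1 * monomial g 1 := by
    rw [monomial_mul, tsub_add_cancel_of_le hge, one_mul]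
  show monomial e (1 : K) ∈ monIdeal K T
  rw [this]
  exact Ideal.mul_mem_left _ _ (Ideal.subset_span ⟨g, hg, rfl⟩)

lemma edgeIdeal_pow (G : SimpleGraph (Fin n)) (q : ℕ) :
    edgeIdeal K G ^ q = monIdeal K (Gen G q) := by
  induction q with
  | zero =>
    have : monomial (0 : Fin n →₀ ℕ) (1 : K) = 1 := rfl
    simp [monIdeal, Gen, this, Ideal.one_eq_top]
  | succ q ih =>
    have hmon : ∀ (g : Fin n →₀ ℕ) (u v : Fin n), monomial g (1 : K) * (X u * X v) =
        monomial (g + Finsupp.single u 1 + Finsupp.single v 1) 1 := by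
      intro g u v
      rw [X, X, monomial_mul, monomial_mul, one_mul, one_mul, add_assoc]
    rw [pow_succ, ih, monIdeal, edgeIdeal, Ideal.span_mul_span']
    refine congrArg Ideal.span (Set.ext fun p => ?_)
    constructor
    · rintro ⟨_, ⟨g, hg, rfl⟩, _, ⟨u, v, h, rfl⟩, rfl⟩
      exact ⟨_, Gen.add hg h, (hmon g u v).symm⟩
    · rintro ⟨_, ⟨g, hg, u, v, h, rfl⟩, rfl⟩
      exact ⟨_, ⟨g, hg, rfl⟩, _, ⟨u, v, h, rfl⟩, hmon g u v⟩

lemma exists_gradedFreeRes {I : Ideal (S n K)} {r : ℕ}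
    (h : HasReg I (polyGr.comap (Submodule.subtype I)) r) :
    ∃ F : GradedFreeRes K I, ∀ i a, F.shift i a ≤ r + i := by
  obtain ⟨l, h⟩ := h
  obtain ⟨R⟩ := h.toGRes
  refine ⟨
    { len := R.len
      rank := R.rank
      rank_zero := R.rank_zero
      shift := R.shift
      d := R.d
      aug := (Submodule.subtype I).comp R.aug
      aug_range := by rw [LinearMap.range_comp, R.surj, Submodule.map_top, Submodule.range_subtype]
      exact_zero := by
        rw [LinearMap.ker_comp, Submodule.ker_subtype, ← R.exact_zero]
        rfl
      exact_succ := R.exact_succ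
      homog_aug := R.homog_aug
      homog_d := R.homog_d }, R.bound⟩

lemma reg_le {I : Ideal (S n K)} {r : ℕ} (F : GradedFreeRes K I)
    (h : ∀ i a, F.shift i a ≤ r + i) : reg K I ≤ r := by
  have hmem : (r : ℤ) ∈ { r : ℤ | ∃ F : GradedFreeRes K I,
      ∀ i, ∀ a : Fin (F.rank i), (F.shift i a : ℤ) - (i : ℤ) ≤ r } :=
    ⟨F, fun i a => by have := h i a; omega⟩
  by_cases hb : BddBelow { r : ℤ | ∃ F : GradedFreeRes K I,
      ∀ i, ∀ a : Fin (F.rank i), (F.shift i a : ℤ) - (i : ℤ) ≤ r }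
  · exact csInf_le hb hmem
  · -- An infimum of a set of integers that is not bounded below is `0` by convention.
    rw [reg, Int.csInf_of_not_bddBelow hb]
    exact Int.natCast_nonneg r

end conclusion

end BipReg

/-- **Jayanthan–Narayanan–Selvaraja.**  Let `G` be a bipartite graph with at least
one edge and `I = I(G)` its edge ideal.  Then for all `q ≥ 1`,
`reg I^q ≤ 2q + co-chord(G) - 1`. -/
theorem regularity_pow_le_of_bipartite {n : ℕ} (K : Type) [Field K]
    (G : SimpleGraph (Fin n)) (hG : ∃ u v, G.Adj u v)
    (X : Set (Fin n)) (hbip : ∀ u v, G.Adj u v → (u ∈ X ↔ v ∉ X)) :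
    ∀ q : ℕ, 1 ≤ q →
      reg K ((edgeIdeal K G) ^ q) ≤ 2 * (q : ℤ) + (cochordNum G : ℤ) - 1 := by
  intro q hq
  obtain ⟨q, rfl⟩ : ∃ k, q = k + 1 := ⟨q - 1, by omega⟩
  obtain ⟨f, hf, hsup⟩ := BipReg.cochordNum_spec G
  have hQ : BipReg.QReg K (BipReg.up (BipReg.Gen G (q + 1))) (2 * q + cochordNum G) := by
    refine BipReg.qreg_pow K hbip
      (R := fun i u v => ∃ h : i < cochordNum G, (f ⟨i, h⟩).Adj u v ∧ u ∈ X) ?_ ?_ ?_ q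
    · rintro i u v ⟨h, huv, hu⟩
      exact ⟨(hf _).1 huv, hu⟩
    · intro u v huv hu
      rw [← hsup, SimpleGraph.iSup_adj] at huv
      obtain ⟨i, hi⟩ := huv
      exact ⟨i, i.2, i.2, hi, hu⟩
    · intro i u u'
      by_cases hu : u ∈ X
      · by_cases hu' : u' ∈ X
        · by_cases hi : i < cochordNum G
          · refine (BipReg.nested_of_chordal hbip (hf ⟨i, hi⟩).1 (hf ⟨i, hi⟩).2 hu hu').imp ?_ ?_
            · rintro h v ⟨_, hv, -⟩
              exact ⟨hi, h v hv, hu'⟩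
            · rintro h v ⟨_, hv, -⟩
              exact ⟨hi, h v hv, hu⟩
          · exact Or.inl fun v ⟨h, _⟩ => absurd h hi
        · exact Or.inr fun v ⟨_, _, h⟩ => absurd h hu'
      · exact Or.inl fun v ⟨_, _, h⟩ => absurd h hu
  obtain ⟨F, hF⟩ := BipReg.exists_gradedFreeRes hQ.toIdeal
  rw [BipReg.edgeIdeal_pow, ← BipReg.monIdeal_up]
  refine (BipReg.reg_le F hF).trans ?_
  push_cast
  omega
end
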